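/- arXiv:2212.06670 — 3 statements merged into one kernel-verified Lean document; each statement's English description precedes it below -/
import Mathlib

section
/- Let W be the Weyl group of type D_n (n ≥ 4) with simple reflections s_1, …, s_n labeled as in Bourbaki. Then w_{1,0}·w_0 = (s_1 s_2 ⋯ s_{n−2})·(s_1 s_2 ⋯ s_{n−2} s_{n−1} s_n)⁻¹, and the set of elements of minimal length in the conjugacy class of w_{1,0}·w_0 is exactly {s_{n−1}·s_n}; in particular, the minimal length in this conjugacy class is 2. -/
noncomputable section

/-- The Coxeter matrix of type `Dₙ` with Bourbaki labels: the simple reflections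
`s_1, …, s_n` correspond to the indices `0, …, n-1`; there are bonds of order `3`
between consecutive indices `0,…,n-2` (the chain `s_1 — s_2 — ⋯ — s_{n-1}`) and between
the indices `n-3` and `n-1` (the bond `s_{n-2} — s_n`). -/
def CoxeterMatrixD (n : ℕ) : CoxeterMatrix (Fin n) where
  M := Matrix.of fun i j : Fin n ↦
    if i = j then 1
    else if (((i : ℕ) + 1 = j ∨ (j : ℕ) + 1 = i) ∧ (i : ℕ) + 1 ≠ n ∧ (j : ℕ) + 1 ≠ n)
        ∨ ((i : ℕ) + 3 = n ∧ (j : ℕ) + 1 = n) ∨ ((j : ℕ) + 3 = n ∧ (i : ℕ) + 1 = n)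
      then 3 else 2
  isSymm := by
    unfold Matrix.IsSymm
    ext i j
    simp only [Matrix.transpose_apply, Matrix.of_apply]
    rcases eq_or_ne i j with h | h
    · simp [h]
    · rw [if_neg h.symm, if_neg h]
      congr 1
      apply propext
      tauto
  diagonal := by intro i; simp
  off_diagonal := by
    intro i j h
    simp only [Matrix.of_apply, if_neg h]
    split <;> omega

/-- The Weyl group of type `Dₙ`, given by its Coxeter presentation. -/
abbrev WD (n : ℕ) := (CoxeterMatrixD n).Group

/-- The canonical Coxeter system of type `Dₙ`. -/
def csD (n : ℕ) : CoxeterSystem (CoxeterMatrixD n) (WD n) :=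
  (CoxeterMatrixD n).toCoxeterSystem

/-- `segD n a b` is the product `s_a s_{a+1} ⋯ s_b` (Bourbaki labels). -/
def segD (n a b : ℕ) : WD n :=
  (((List.finRange n).filter fun k : Fin n => a ≤ (k : ℕ) + 1 ∧ (k : ℕ) + 1 ≤ b).map
    (csD n).simple).prod

/-- The standard parabolic subgroup of the type-`Dₙ` Weyl group generated by all simple
reflections except the one with (zero-based) index `i`. -/
def paraD (n : ℕ) (i : Fin n) : Subgroup (WD n) :=
  Subgroup.closure ((csD n).simple '' {j : Fin n | j ≠ i})

/-!
For a word `ω` in the simple reflections and a reflection `t`, the parity of the number of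
occurrences of `t` among the right inversions of `ω` depends only on the element `w` represented by
`ω`, and it is `1` exactly when `t` is an inversion of `w`. As a function of `w` it is a cocycle, so
an element `x` equals `w₁ * w₀`, for `w₁` longest in a parabolic subgroup `W_I`, as soon as the
simple reflections in `I` are non-descents of `x` that `x` conjugates into `W_I`, while those
outside `I` are descents that `x` conjugates out of `W_I`: then every simple reflection is a descent
of `w₁⁻¹ * x`. In type `Dₙ` the palindrome `s_1 ⋯ s_{n-2} (s_{n-1} s_n) s_{n-2} ⋯ s_1` is such an
element for `I` the complement of `s_1`, since it interchanges `s_{n-1}` and `s_n` and commutes with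
`s_2, …, s_{n-2}`.

The palindrome is visibly conjugate to `s_{n-1} s_n`, so the elements of its class have even
positive length. Forgetting signs maps `W` to the symmetric group, with `s_{n-1}` and `s_n` the only
simple reflections having the same image. It kills the class of `s_{n-1} s_n`, which therefore
contains no other product of two simple reflections.
-/

section GeometricRepresentation

section Module

variable {R V : Type*} [CommRing R] [AddCommGroup V] [Module R V] {x y : V} {f g : Module.Dual R V}

theorem reflection_mul_self (hf : f x = 2) :
    Module.reflection hf * Module.reflection hf = 1 :=
  LinearEquiv.ext (Module.involutive_reflection hf)

theorem reflection_mul_reflection_sq_eq_one (hf : f x = 2) (hg : g y = 2) (hfy : f y = 0)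
    (hgx : g x = 0) : (Module.reflection hf * Module.reflection hg) ^ 2 = 1 := by
  ext1 z
  simp only [pow_two, LinearEquiv.mul_apply, Module.reflection_apply, map_sub, map_smul, hf, hg,
    hfy, hgx, LinearEquiv.coe_one, id_eq]
  module

end Module

open Polynomial.Chebyshev

theorem eval_S_two_mul_cos {θ : ℝ} (hθ : Real.sin θ ≠ 0) (k : ℤ) :
    (S ℝ k).eval (2 * Real.cos θ) = Real.sin ((k + 1) * θ) / Real.sin θ :=
  eq_div_of_mul_eq hθ (S_two_mul_real_cos θ k)

theorem eval_S_sub_one_eq_zero {θ : ℝ} (hθ : Real.sin θ ≠ 0) {k : ℤ} (hk : k * θ = Real.pi) :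
    (S ℝ (k - 1)).eval (2 * Real.cos θ) = 0 := by
  rw [eval_S_two_mul_cos hθ, Int.cast_sub, Int.cast_one, sub_add_cancel, hk, Real.sin_pi, zero_div]

theorem eval_S_add_eval_S_sub_one_eq_zero {θ : ℝ} (hθ : Real.sin θ ≠ 0) {k : ℤ}
    (hk : (2 * k + 1) * θ = 2 * Real.pi) :
    (S ℝ k).eval (2 * Real.cos θ) + (S ℝ (k - 1)).eval (2 * Real.cos θ) = 0 := by
  have hkθ : (k + 1) * θ = 2 * Real.pi - k * θ := by linear_combination hk
  rw [eval_S_two_mul_cos hθ, eval_S_two_mul_cos hθ, Int.cast_sub, Int.cast_one, sub_add_cancel, hkθ,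
    Real.sin_two_pi_sub, neg_div, neg_add_cancel]

theorem reflection_mul_reflection_pow_eq_one {V : Type*} [AddCommGroup V] [Module ℝ V]
    {x y : V} {f g : Module.Dual ℝ V} (hf : f x = 2) (hg : g y = 2) {m : ℕ} (hm : 3 ≤ m)
    (hfg : f y * g x = 4 * Real.cos (Real.pi / m) ^ 2) :
    (Module.reflection hf * Module.reflection hg) ^ m = 1 := by
  set θ : ℝ := 2 * (Real.pi / m) with hθ
  have ht : 2 * Real.cos θ = f y * g x - 2 := by rw [hfg, hθ, Real.cos_two_mul]; ring
  have hmθ : m * θ = 2 * Real.pi := by rw [hθ]; field_simp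
  have hsin : Real.sin θ ≠ 0 := by
    have hm3 : (3 : ℝ) ≤ m := by exact_mod_cast hm
    exact (Real.sin_pos_of_pos_of_lt_pi (by positivity) (by nlinarith [Real.pi_pos])).ne'
  ext z
  -- The power is `z` plus multiples of `x` and `y` whose coefficients are products of values of the
  -- Chebyshev polynomials `S` at `2 cos θ`; since `m θ = 2π`, each product has a vanishing factor.
  rw [Module.reflection_mul_reflection_pow_apply hf hg m z _ ht]
  obtain ⟨k, rfl | rfl⟩ := m.even_or_odd'
  · have hS := eval_S_sub_one_eq_zero hsin (k := k) (by push_cast at hmθ ⊢; linarith)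
    have h1 : (((2 * k : ℕ) : ℤ) - 1) / 2 = k - 1 := by omega
    have h2 : (((2 * k : ℕ) : ℤ) - 2) / 2 = k - 1 := by omega
    rw [h1, h2, hS]
    simp only [zero_mul, zero_smul, add_zero, LinearEquiv.coe_one, id_eq]
  · have hS := eval_S_add_eval_S_sub_one_eq_zero hsin (k := k) (by push_cast at hmθ ⊢; linarith)
    have h1 : (((2 * k + 1 : ℕ) : ℤ) - 1) / 2 = k := by omega
    have h2 : (((2 * k + 1 : ℕ) : ℤ) - 2) / 2 = k - 1 := by omega
    have h3 : (((2 * k + 1 : ℕ) : ℤ) - 3) / 2 = k - 1 := by omega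
    have h4 : ((2 * k + 1 : ℕ) : ℤ) / 2 = k := by omega
    rw [h1, h2, h3, h4, hS]
    simp only [mul_zero, zero_smul, add_zero, LinearEquiv.coe_one, id_eq]

variable {B : Type*} (M : CoxeterMatrix B)

/-- The linear form `2⟨αᵢ, ·⟩` on the space of the geometric representation of `M`, whose basis of
simple roots `αⱼ` is indexed by `B`. An infinite bond is encoded by `M i j = 0`, for which the junk
value `π / 0 = 0` yields `2⟨αᵢ, αⱼ⟩ = -2`, as it should be. -/
def simpleCoroot (i : B) : Module.Dual ℝ (B →₀ ℝ) :=
  Finsupp.linearCombination ℝ fun j ↦ -2 * Real.cos (Real.pi / M i j)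

theorem simpleCoroot_single (i j : B) :
    simpleCoroot M i (Finsupp.single j 1) = -2 * Real.cos (Real.pi / M i j) := by
  simp [simpleCoroot]

theorem simpleCoroot_single_self (i : B) : simpleCoroot M i (Finsupp.single i 1) = 2 := by
  simp [simpleCoroot_single]

/-- The reflection in the simple root `αᵢ`, through which the simple reflection `i` acts in the
geometric representation of `M`. -/
def simpleReflection (i : B) : (B →₀ ℝ) ≃ₗ[ℝ] (B →₀ ℝ) :=
  Module.reflection (simpleCoroot_single_self M i)

theorem isLiftable_simpleReflection : M.IsLiftable (simpleReflection M) := by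
  intro i j
  have hij : simpleCoroot M i (Finsupp.single j 1) = -2 * Real.cos (Real.pi / M i j) :=
    simpleCoroot_single M i j
  have hji : simpleCoroot M j (Finsupp.single i 1) = -2 * Real.cos (Real.pi / M i j) := by
    rw [simpleCoroot_single, M.symmetric]
  rcases lt_or_ge (M i j) 3 with hlt | hge
  · interval_cases h : M i j
    · exact pow_zero _
    · obtain rfl : i = j := by_contra fun hne ↦ M.off_diagonal i j hne h
      rw [pow_one, simpleReflection, reflection_mul_self]
    · have hij0 : simpleCoroot M i (Finsupp.single j 1) = 0 := by simp [hij]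
      have hji0 : simpleCoroot M j (Finsupp.single i 1) = 0 := by simp [hji]
      exact reflection_mul_reflection_sq_eq_one _ _ hij0 hji0
  · exact reflection_mul_reflection_pow_eq_one _ _ hge (by rw [hij, hji]; ring)

variable {M} {W : Type*} [Group W] (cs : CoxeterSystem M W)

theorem simple_injective : Function.Injective cs.simple := by
  intro i j hij
  by_contra hne
  have hlift (k : B) :
      cs.lift ⟨_, isLiftable_simpleReflection M⟩ (cs.simple k) = simpleReflection M k :=
    cs.lift_apply_simple _ k
  have hr : simpleReflection M i = simpleReflection M j := by rw [← hlift, hij, hlift]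
  have h := congrArg (fun r ↦ r (Finsupp.single i 1) i) hr
  simp only [simpleReflection, Module.reflection_apply, simpleCoroot_single_self] at h
  simp [hne] at h

end GeometricRepresentation

section InversionParity

open CoxeterSystem

variable {B W : Type*} [Group W] {M : CoxeterMatrix B} (cs : CoxeterSystem M W)

theorem prod_map_reverse_alternatingWord {G : Type*} [Monoid G] (f : B → G) (i j : B) (p : ℕ) :
    ((alternatingWord i j (2 * p)).reverse.map f).prod = (f j * f i) ^ p := by
  induction p with
  | zero => simp [alternatingWord]
  | succ p ih =>
    rw [mul_add, mul_one, alternatingWord_succ, alternatingWord_succ, List.concat_eq_append,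
      List.concat_eq_append, List.reverse_append, List.reverse_append, List.map_append,
      List.map_append, List.prod_append, List.prod_append, ih, pow_succ']
    simp [mul_assoc]

theorem leftInvSeq_alternatingWord_two_mul (i j : B) :
    ∃ l : List W, cs.leftInvSeq (alternatingWord i j (2 * M i j)) = l ++ l := by
  set L := cs.leftInvSeq (alternatingWord i j (2 * M i j)) with hL
  refine ⟨L.take (M i j), ?_⟩
  have hlen : L.length = 2 * M i j := by rw [hL, length_leftInvSeq, length_alternatingWord]
  have hdrop : L.drop (M i j) = L.take (M i j) := by
    refine List.ext_getElem (by rw [List.length_drop, List.length_take]; omega) fun k hk₁ hk₂ ↦ ?_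
    have hk : k < M i j := by
      rw [List.length_take] at hk₂
      omega
    rw [List.getElem_drop, List.getElem_take,
      getElem_leftInvSeq_alternatingWord _ _ _ _ _ (by omega),
      getElem_leftInvSeq_alternatingWord _ _ _ _ _ (by omega), prod_alternatingWord_eq_mul_pow,
      prod_alternatingWord_eq_mul_pow, if_neg (by grind), if_neg (by grind),
      show (2 * (M i j + k) + 1) / 2 = M i j + (2 * k + 1) / 2 by omega, pow_add,
      cs.simple_mul_simple_pow', one_mul]
  conv_lhs => rw [← L.take_append_drop (M i j), hdrop]

open scoped Classical in
/-- The action of the simple reflection `i` on pairs `(t, ε)`: it conjugates `t` and flips the sign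
`ε`, written additively, exactly when `t` is `cs.simple i`. Bourbaki restricts `t` to the
reflections; allowing every `t : W` avoids a subtype. -/
def inversionPerm (i : B) : Equiv.Perm (W × ZMod 2) :=
  Function.Involutive.toPerm (fun p ↦
    (cs.simple i * p.1 * cs.simple i, p.2 + if p.1 = cs.simple i then 1 else 0)) <| by
    rintro ⟨t, ε⟩
    have hfix : cs.simple i * (t * cs.simple i) = cs.simple i ↔ t = cs.simple i := by
      rw [mul_eq_left, mul_eq_one_iff_eq_inv, cs.inv_simple]
    simp only [hfix, add_assoc, CharTwo.add_self_eq_zero, add_zero, mul_assoc,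
      cs.simple_mul_simple_self, mul_one, cs.simple_mul_simple_cancel_left]

open scoped Classical in
theorem inversionPerm_apply (i : B) (t : W) (ε : ZMod 2) :
    inversionPerm cs i (t, ε) =
      (cs.simple i * t * cs.simple i, ε + if t = cs.simple i then 1 else 0) :=
  rfl

open scoped Classical in
theorem prod_map_inversionPerm_apply (ω : List B) (t : W) (ε : ZMod 2) :
    (ω.map (inversionPerm cs)).prod (t, ε) =
      (cs.wordProd ω * t * (cs.wordProd ω)⁻¹, ε + (cs.rightInvSeq ω).count t) := by
  induction ω with
  | nil => simp
  | cons i ω ih =>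
    have hconj : cs.wordProd ω * t * (cs.wordProd ω)⁻¹ = cs.simple i ↔
        (cs.wordProd ω)⁻¹ * cs.simple i * cs.wordProd ω = t := by
      rw [mul_inv_eq_iff_eq_mul, mul_assoc, inv_mul_eq_iff_eq_mul, eq_comm]
    rw [List.map_cons, List.prod_cons, Equiv.Perm.mul_apply, ih, inversionPerm_apply,
      wordProd_cons, rightInvSeq, List.count_cons, mul_inv_rev, cs.inv_simple]
    simp only [hconj, beq_iff_eq, Nat.cast_add, Nat.cast_ite, Nat.cast_one, Nat.cast_zero,
      add_assoc]
    simp only [mul_assoc]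

theorem isLiftable_inversionPerm : M.IsLiftable (inversionPerm cs) := by
  classical
  intro i j
  obtain ⟨l, hl⟩ := leftInvSeq_alternatingWord_two_mul cs j i
  have hone : cs.wordProd (alternatingWord j i (2 * M j i)).reverse = 1 := by
    rw [wordProd, prod_map_reverse_alternatingWord, M.symmetric, cs.simple_mul_simple_pow]
  ext1 ⟨t, ε⟩
  rw [M.symmetric, ← prod_map_reverse_alternatingWord, prod_map_inversionPerm_apply, hone,
    rightInvSeq_reverse, List.count_reverse, hl, List.count_append, Nat.cast_add,
    CharTwo.add_self_eq_zero]
  simp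

/-- The action of `W` on `W × ZMod 2` extending `inversionPerm`; it shows that the parity of the
number of occurrences of `t` in a right inversion sequence depends only on the element
represented. -/
def inversionHom : W →* Equiv.Perm (W × ZMod 2) :=
  cs.lift ⟨inversionPerm cs, isLiftable_inversionPerm cs⟩

open scoped Classical in
theorem inversionHom_wordProd_apply (ω : List B) (t : W) (ε : ZMod 2) :
    inversionHom cs (cs.wordProd ω) (t, ε) =
      (cs.wordProd ω * t * (cs.wordProd ω)⁻¹, ε + (cs.rightInvSeq ω).count t) := by
  rw [← prod_map_inversionPerm_apply, wordProd, map_list_prod, List.map_map]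
  congr 3
  ext1 i
  exact cs.lift_apply_simple (isLiftable_inversionPerm cs) i

/-- The parity of the number of occurrences of `t` in the right inversion sequence of any word
for `w`. For a reflection `t` it detects whether `t` is a right inversion of `w`. -/
def inversionParity (w t : W) : ZMod 2 := (inversionHom cs w (t, 0)).2

open scoped Classical in
theorem inversionParity_wordProd (ω : List B) (t : W) :
    inversionParity cs (cs.wordProd ω) t = (cs.rightInvSeq ω).count t := by
  rw [inversionParity, inversionHom_wordProd_apply, zero_add]

theorem inversionHom_apply (w t : W) (ε : ZMod 2) :
    inversionHom cs w (t, ε) = (w * t * w⁻¹, ε + inversionParity cs w t) := by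
  classical
  obtain ⟨ω, rfl⟩ := cs.wordProd_surjective w
  rw [inversionHom_wordProd_apply, inversionParity_wordProd]

theorem inversionParity_one (t : W) : inversionParity cs 1 t = 0 := by
  rw [inversionParity, map_one, Equiv.Perm.one_apply]

theorem inversionParity_mul (u v t : W) :
    inversionParity cs (u * v) t =
      inversionParity cs v t + inversionParity cs u (v * t * v⁻¹) := by
  rw [inversionParity, map_mul, Equiv.Perm.mul_apply, inversionHom_apply, inversionHom_apply,
    zero_add]

theorem inversionParity_inv (w t : W) :
    inversionParity cs w⁻¹ t = inversionParity cs w (w⁻¹ * t * w) := by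
  have h := inversionParity_mul cs w w⁻¹ t
  rw [mul_inv_cancel, inversionParity_one, inv_inv] at h
  exact CharTwo.add_eq_zero.1 h.symm

theorem inversionParity_simple_self (i : B) :
    inversionParity cs (cs.simple i) (cs.simple i) = 1 := by
  classical
  simpa using inversionParity_wordProd cs [i] (cs.simple i)

theorem inversionParity_simple_of_ne {i : B} {t : W} (h : t ≠ cs.simple i) :
    inversionParity cs (cs.simple i) t = 0 := by
  classical
  simpa [h.symm] using inversionParity_wordProd cs [i] t

theorem inversionParity_self {t : W} (ht : cs.IsReflection t) : inversionParity cs t t = 1 := by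
  obtain ⟨w, i, rfl⟩ := ht
  have hconj : w⁻¹ * (w * cs.simple i * w⁻¹) * w = cs.simple i := by group
  rw [inversionParity_mul, inv_inv, inversionParity_inv, hconj, inversionParity_mul,
    inversionParity_simple_self, mul_inv_cancel_right, add_left_comm, CharTwo.add_self_eq_zero,
    add_zero]

theorem isRightInversion_of_inversionParity_ne_zero {w t : W}
    (h : inversionParity cs w t ≠ 0) : cs.IsRightInversion w t := by
  classical
  obtain ⟨ω, hω, rfl⟩ := cs.exists_isReduced w
  rw [inversionParity_wordProd] at h
  refine cs.isRightInversion_of_mem_rightInvSeq hω (List.count_pos_iff.1 ?_)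
  exact Nat.pos_of_ne_zero fun h0 ↦ h (by rw [h0, Nat.cast_zero])

theorem isRightInversion_iff_inversionParity_eq_one {w t : W} (ht : cs.IsReflection t) :
    cs.IsRightInversion w t ↔ inversionParity cs w t = 1 := by
  refine ⟨fun h ↦ ?_, fun h ↦ isRightInversion_of_inversionParity_ne_zero cs (by simp [h])⟩
  by_contra hne
  have hmul : inversionParity cs (w * t) t = inversionParity cs w t + 1 := by
    rw [inversionParity_mul, inversionParity_self cs ht, mul_inv_cancel_right, add_comm]
  refine ht.isRightInversion_mul_left_iff.1 (isRightInversion_of_inversionParity_ne_zero cs ?_) h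
  have hzero : inversionParity cs w t = 0 := not_imp_comm.1 (Fin.eq_one_of_ne_zero _) hne
  rw [hmul, hzero, zero_add]
  exact one_ne_zero

theorem isRightDescent_iff_inversionParity_eq_one {w : W} {i : B} :
    cs.IsRightDescent w i ↔ inversionParity cs w (cs.simple i) = 1 := by
  rw [← isRightInversion_simple_iff_isRightDescent,
    isRightInversion_iff_inversionParity_eq_one cs (cs.isReflection_simple i)]

theorem not_isRightDescent_iff_inversionParity_eq_zero {w : W} {i : B} :
    ¬cs.IsRightDescent w i ↔ inversionParity cs w (cs.simple i) = 0 := by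
  rw [isRightDescent_iff_inversionParity_eq_one]
  exact ⟨not_imp_comm.1 (Fin.eq_one_of_ne_zero _), fun h ↦ by simp [h]⟩

theorem inversionParity_eq_zero_of_mem_closure {I : Set B} {w t : W}
    (hw : w ∈ Subgroup.closure (cs.simple '' I)) (ht : t ∉ Subgroup.closure (cs.simple '' I)) :
    inversionParity cs w t = 0 := by
  induction hw using Subgroup.closure_induction generalizing t with
  | mem w hw =>
    obtain ⟨i, hi, rfl⟩ := hw
    exact inversionParity_simple_of_ne cs fun h ↦
      ht (h ▸ Subgroup.subset_closure (Set.mem_image_of_mem _ hi))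
  | one => exact inversionParity_one cs t
  | mul u v _ hv ihu ihv =>
    rw [inversionParity_mul, ihv ht, ihu (by
      rwa [Subgroup.mul_mem_cancel_right _ (inv_mem hv), Subgroup.mul_mem_cancel_left _ hv]),
      add_zero]
  | inv w hw ih =>
    rw [inversionParity_inv, ih (by
      rwa [Subgroup.mul_mem_cancel_right _ hw, Subgroup.mul_mem_cancel_left _ (inv_mem hw)])]

end InversionParity

section LongestElements

variable {B W : Type*} [Group W] {M : CoxeterMatrix B} (cs : CoxeterSystem M W)

theorem inversionParity_eq_one_of_forall_length_le {H : Subgroup W} {w t : W} (hw : w ∈ H)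
    (hmax : ∀ v ∈ H, cs.length v ≤ cs.length w) (ht : t ∈ H) (hrefl : cs.IsReflection t) :
    inversionParity cs w t = 1 :=
  (isRightInversion_iff_inversionParity_eq_one cs hrefl).1
    ⟨hrefl, (hmax _ (mul_mem hw ht)).lt_of_ne (hrefl.length_mul_left_ne w)⟩

theorem eq_of_forall_isRightDescent {w₀ w : W} (hw₀ : ∀ v, cs.length v ≤ cs.length w₀)
    (hw : ∀ i, cs.IsRightDescent w i) : w = w₀ := by
  have hall (t : W) (ht : cs.IsReflection t) : inversionParity cs w₀ t = 1 :=
    inversionParity_eq_one_of_forall_length_le cs (Subgroup.mem_top w₀) (fun v _ ↦ hw₀ v)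
      (Subgroup.mem_top t) ht
  by_contra hne
  obtain ⟨i, hi⟩ := cs.exists_rightDescent_of_ne_one (mt inv_mul_eq_one.1 (Ne.symm hne))
  rw [isRightDescent_iff_inversionParity_eq_one, inversionParity_mul,
    (isRightDescent_iff_inversionParity_eq_one cs).1 (hw i), inversionParity_inv,
    hall _ (by simpa [mul_assoc] using ((cs.isReflection_simple i).conj w).conj w₀⁻¹)] at hi
  revert hi
  decide

theorem longest_mul_longest_eq {I : Set B} {w₀ w₁ x : W}
    (hw₀ : ∀ v, cs.length v ≤ cs.length w₀) (hw₁ : w₁ ∈ Subgroup.closure (cs.simple '' I))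
    (hw₁max : ∀ v ∈ Subgroup.closure (cs.simple '' I), cs.length v ≤ cs.length w₁)
    (hI : ∀ i ∈ I, ¬cs.IsRightDescent x i ∧
      x * cs.simple i * x⁻¹ ∈ Subgroup.closure (cs.simple '' I))
    (hIc : ∀ i ∉ I, cs.IsRightDescent x i ∧
      x * cs.simple i * x⁻¹ ∉ Subgroup.closure (cs.simple '' I)) :
    w₁ * w₀ = x := by
  suffices hx : w₁⁻¹ * x = w₀ by rw [← hx, mul_inv_cancel_left]
  refine eq_of_forall_isRightDescent cs hw₀ fun i ↦ ?_
  rw [isRightDescent_iff_inversionParity_eq_one, inversionParity_mul]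
  by_cases hi : i ∈ I
  · obtain ⟨hdesc, hmem⟩ := hI i hi
    rw [(not_isRightDescent_iff_inversionParity_eq_zero cs).1 hdesc, zero_add]
    refine inversionParity_eq_one_of_forall_length_le cs (inv_mem hw₁) ?_ hmem
      ((cs.isReflection_simple i).conj x)
    rwa [cs.length_inv]
  · obtain ⟨hdesc, hmem⟩ := hIc i hi
    rw [(isRightDescent_iff_inversionParity_eq_one cs).1 hdesc,
      inversionParity_eq_zero_of_mem_closure cs (inv_mem hw₁) hmem, add_zero]

theorem two_le_length_of_isConj {i j : B} (hij : i ≠ j) {w : W}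
    (h : IsConj (cs.simple i * cs.simple j) w) : 2 ≤ cs.length w := by
  have hne : cs.length w ≠ 0 := by
    intro h0
    rw [cs.length_eq_zero_iff.1 h0, isConj_one_left, mul_eq_one_iff_eq_inv, cs.inv_simple] at h
    exact hij (simple_injective cs h)
  have heven : Even (cs.length w) := by
    have hpar := cs.lengthParity.map_isConj h
    rw [isConj_iff_eq, map_mul, cs.lengthParity_simple, cs.lengthParity_simple,
      cs.lengthParity_eq_ofAdd_length] at hpar
    exact ZMod.natCast_eq_zero_iff_even.1 (Multiplicative.ofAdd.injective hpar).symm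
  grind

theorem length_simple_mul_simple {i j : B} (hij : i ≠ j) :
    cs.length (cs.simple i * cs.simple j) = 2 := by
  refine le_antisymm ?_ (two_le_length_of_isConj cs hij (IsConj.refl _))
  simpa only [cs.length_simple] using cs.length_mul_le (cs.simple i) (cs.simple j)

theorem exists_eq_simple_mul_simple_of_length_eq_two {w : W} (h : cs.length w = 2) :
    ∃ i j, w = cs.simple i * cs.simple j := by
  obtain ⟨ω, hω, rfl⟩ := cs.exists_isReduced w
  obtain ⟨i, j, rfl⟩ := List.length_eq_two.1 (hω.eq.symm.trans h)
  exact ⟨i, j, by rw [cs.wordProd_cons, cs.wordProd_singleton]⟩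

end LongestElements

section CoxeterRelations

theorem semiconjBy_mul_mul_of_braid {G : Type*} [Semigroup G] {a b c : G} (hbc : Commute b c)
    (hab : a * b * a = b * a * b) (hac : a * c * a = c * a * c) :
    SemiconjBy (a * (b * c) * a) b c := by
  calc a * (b * c) * a * b = a * c * (b * a * b) := by rw [hbc.eq]; simp only [mul_assoc]
    _ = a * c * a * b * a := by rw [← hab]; simp only [mul_assoc]
    _ = c * (a * (b * c) * a) := by rw [hac, hbc.eq]; simp only [mul_assoc]

theorem commute_mul_mul_mul_mul_of_braid {G : Type*} [Semigroup G] {a b u : G} (hau : Commute a u)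
    (hab : a * b * a = b * a * b) : Commute (a * (b * u * b) * a) b := by
  calc a * (b * u * b) * a * b = a * b * u * (b * a * b) := by simp only [mul_assoc]
    _ = a * b * (u * a) * b * a := by rw [← hab]; simp only [mul_assoc]
    _ = a * b * a * u * b * a := by rw [← hau.eq]; simp only [mul_assoc]
    _ = b * (a * (b * u * b) * a) := by rw [hab]; simp only [mul_assoc]

theorem mul_pow_two_of_commute {G : Type*} [Monoid G] {a b : G} (ha : a * a = 1) (hb : b * b = 1)
    (hab : Commute a b) : (a * b) ^ 2 = 1 := by
  rw [hab.mul_pow, pow_two, pow_two, ha, hb, mul_one]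

theorem mul_pow_three_of_braid {G : Type*} [Monoid G] {a b : G} (ha : a * a = 1) (hb : b * b = 1)
    (hab : a * b * a = b * a * b) : (a * b) ^ 3 = 1 := by
  calc (a * b) ^ 3 = (a * b * a) * (b * a * b) := by
        simp only [pow_succ, pow_zero, one_mul, mul_assoc]
    _ = a * b * (a * a) * b * a := by rw [← hab]; simp only [mul_assoc]
    _ = 1 := by rw [ha, mul_one, mul_assoc a, hb, mul_one, ha]

variable {B W : Type*} [Group W] {M : CoxeterMatrix B} (cs : CoxeterSystem M W)

theorem commute_simple_of_eq_two {i j : B} (h : M i j = 2) :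
    Commute (cs.simple i) (cs.simple j) := by
  rw [commute_iff_eq]
  have hbraid := cs.wordProd_braidWord_eq i j
  simpa [CoxeterSystem.braidWord, M.symmetric j i, h, CoxeterSystem.alternatingWord,
    CoxeterSystem.wordProd_cons, mul_assoc] using hbraid

theorem braid_simple_of_eq_three {i j : B} (h : M i j = 3) :
    cs.simple i * cs.simple j * cs.simple i = cs.simple j * cs.simple i * cs.simple j := by
  have hbraid := cs.wordProd_braidWord_eq j i
  simpa [CoxeterSystem.braidWord, M.symmetric j i, h, CoxeterSystem.alternatingWord,
    CoxeterSystem.wordProd_cons, mul_assoc] using hbraid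

end CoxeterRelations

section TypeD

theorem CoxeterMatrixD_apply {n : ℕ} (i j : Fin n) : CoxeterMatrixD n i j =
    if i = j then 1
    else if (((i : ℕ) + 1 = j ∨ (j : ℕ) + 1 = i) ∧ (i : ℕ) + 1 ≠ n ∧ (j : ℕ) + 1 ≠ n)
        ∨ ((i : ℕ) + 3 = n ∧ (j : ℕ) + 1 = n) ∨ ((j : ℕ) + 3 = n ∧ (i : ℕ) + 1 = n)
      then 3 else 2 := rfl

variable (m : ℕ)

/-- The simple reflection `s_{n-1-i}` of type `Dₙ` with `n = m + 2`. The arm is numbered away from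
the fork, so that `armD m 0 = s_{n-1}`, `armD m 1 = s_{n-2}` and `armD m m = s_1`; only `i ≤ m` is
meaningful, since `m - i` is truncated. -/
def armD (i : ℕ) : WD (m + 2) := (csD (m + 2)).simple ⟨m - i, by omega⟩

/-- The simple reflection `s_n` of type `Dₙ` with `n = m + 2`, the second end node of the fork,
which like `armD m 0` is bonded to `armD m 1`. -/
def forkD : WD (m + 2) := (csD (m + 2)).simple (Fin.last (m + 1))

/-- The palindrome `s_{n-1-d} ⋯ s_{n-2} (s_{n-1} s_n) s_{n-2} ⋯ s_{n-1-d}` in type `Dₙ` with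
`n = m + 2`. For `d = m` this is the element `w_{1,0} w₀`. -/
def palD : ℕ → WD (m + 2)
  | 0 => armD m 0 * forkD m
  | d + 1 => armD m (d + 1) * palD d * armD m (d + 1)

variable {m}

theorem commute_armD_armD {i j : ℕ} (hij : i + 2 ≤ j) (hj : j ≤ m) :
    Commute (armD m i) (armD m j) := by
  refine commute_simple_of_eq_two _ ?_
  rw [CoxeterMatrixD_apply, if_neg (by simp only [Fin.mk.injEq]; omega),
    if_neg (by dsimp only; omega)]

theorem commute_armD_forkD {i : ℕ} (hi : i ≠ 1) (him : i ≤ m) :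
    Commute (armD m i) (forkD m) := by
  refine commute_simple_of_eq_two _ ?_
  rw [CoxeterMatrixD_apply, if_neg (by simp only [Fin.ext_iff, Fin.val_last]; omega),
    if_neg (by simp only [Fin.val_last]; omega)]

theorem braid_armD_succ_armD {i : ℕ} (hi : i + 1 ≤ m) :
    armD m (i + 1) * armD m i * armD m (i + 1) = armD m i * armD m (i + 1) * armD m i := by
  refine braid_simple_of_eq_three _ ?_
  rw [CoxeterMatrixD_apply, if_neg (by simp only [Fin.mk.injEq]; omega),
    if_pos (by dsimp only; omega)]

theorem braid_armD_one_forkD (hm : 1 ≤ m) :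
    armD m 1 * forkD m * armD m 1 = forkD m * armD m 1 * forkD m := by
  refine braid_simple_of_eq_three _ ?_
  rw [CoxeterMatrixD_apply, if_neg (by simp only [Fin.ext_iff, Fin.val_last]; omega),
    if_pos (by simp only [Fin.val_last, and_true]; omega)]

theorem commute_armD_palD {d i : ℕ} (hdi : d + 2 ≤ i) (him : i ≤ m) :
    Commute (armD m i) (palD m d) := by
  induction d with
  | zero =>
    exact (commute_armD_armD hdi him).symm.mul_right (commute_armD_forkD (by omega) him)
  | succ d ih =>
    have harm := (commute_armD_armD (show d + 1 + 2 ≤ i from hdi) him).symm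
    exact (harm.mul_right (ih (by omega))).mul_right harm

theorem commute_palD_armD {d i : ℕ} (hi : 1 ≤ i) (hid : i < d) (hd : d ≤ m) :
    Commute (palD m d) (armD m i) := by
  induction d with
  | zero => omega
  | succ d ih =>
    rcases (Nat.lt_succ_iff.1 hid).eq_or_lt with rfl | hlt
    · obtain ⟨e, rfl⟩ := Nat.exists_eq_add_of_le' hi
      exact commute_mul_mul_mul_mul_of_braid (commute_armD_palD le_rfl hd) (braid_armD_succ_armD hd)
    · have harm := (commute_armD_armD (show i + 2 ≤ d + 1 by omega) hd).symm
      exact (harm.mul_left (ih hlt (by omega))).mul_left harm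

theorem semiconjBy_palD {x y : WD (m + 2)} (h₁ : SemiconjBy (palD m 1) x y)
    (hx : ∀ i, 2 ≤ i → i ≤ m → Commute (armD m i) x)
    (hy : ∀ i, 2 ≤ i → i ≤ m → Commute (armD m i) y) {d : ℕ} (hd : 1 ≤ d) (hdm : d ≤ m) :
    SemiconjBy (palD m d) x y := by
  induction d, hd using Nat.le_induction with
  | base => exact h₁
  | succ d hd ih =>
    exact (SemiconjBy.mul_left (hy _ (by omega) hdm) (ih (by omega))).mul_left
      (hx _ (by omega) hdm)

theorem semiconjBy_palD_armD_zero_forkD {d : ℕ} (hd : 1 ≤ d) (hdm : d ≤ m) :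
    SemiconjBy (palD m d) (armD m 0) (forkD m) := by
  have hm : 1 ≤ m := hd.trans hdm
  refine semiconjBy_palD ?_ (fun i hi him ↦ (commute_armD_armD hi him).symm)
    (fun i hi him ↦ commute_armD_forkD (by omega) him) hd hdm
  exact semiconjBy_mul_mul_of_braid (commute_armD_forkD zero_ne_one m.zero_le)
    (braid_armD_succ_armD hm) (braid_armD_one_forkD hm)

theorem semiconjBy_palD_forkD_armD_zero {d : ℕ} (hd : 1 ≤ d) (hdm : d ≤ m) :
    SemiconjBy (palD m d) (forkD m) (armD m 0) := by
  have hm : 1 ≤ m := hd.trans hdm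
  have hfork : Commute (armD m 0) (forkD m) := commute_armD_forkD zero_ne_one m.zero_le
  refine semiconjBy_palD ?_ (fun i hi him ↦ commute_armD_forkD (by omega) him)
    (fun i hi him ↦ (commute_armD_armD hi him).symm) hd hdm
  rw [palD, palD, hfork.eq]
  exact semiconjBy_mul_mul_of_braid hfork.symm (braid_armD_one_forkD hm) (braid_armD_succ_armD hm)

theorem palD_mul_simple_mul_inv_mem_paraD (hm : 1 ≤ m) {j : Fin (m + 2)} (hj : j ≠ 0) :
    palD m m * (csD (m + 2)).simple j * (palD m m)⁻¹ ∈ paraD (m + 2) 0 := by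
  have hmem {k : Fin (m + 2)} (hk : k ≠ 0) : (csD (m + 2)).simple k ∈ paraD (m + 2) 0 :=
    Subgroup.subset_closure (Set.mem_image_of_mem _ hk)
  have hj0 : (j : ℕ) ≠ 0 := Fin.val_ne_zero_iff.2 hj
  induction j using Fin.lastCases with
  | last =>
    rw [← forkD, mul_inv_eq_iff_eq_mul.2 (semiconjBy_palD_forkD_armD_zero hm le_rfl).eq]
    exact hmem (by simp only [ne_eq, Fin.ext_iff, Fin.val_zero]; omega)
  | cast j =>
    have hjarm : (csD (m + 2)).simple j.castSucc = armD m (m - j) :=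
      congrArg _ (Fin.ext (by simp only [Fin.val_castSucc]; omega))
    rw [hjarm]
    rcases (Nat.lt_succ_iff.1 j.isLt).eq_or_lt with hjm | hjm
    · rw [hjm, Nat.sub_self, mul_inv_eq_iff_eq_mul.2 (semiconjBy_palD_armD_zero_forkD hm le_rfl).eq]
      exact hmem (Fin.last_pos.ne')
    · rw [mul_inv_eq_iff_eq_mul.2
        (commute_palD_armD (by omega) (by rw [Fin.val_castSucc] at hj0; omega) le_rfl).eq, ← hjarm]
      exact hmem hj

theorem isConj_palD (d : ℕ) : IsConj (palD m 0) (palD m d) := by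
  induction d with
  | zero => exact IsConj.refl _
  | succ d ih =>
    refine ih.trans (isConj_iff.2 ⟨armD m (d + 1), ?_⟩)
    rw [palD, armD, (csD (m + 2)).inv_simple]

theorem two_le_length_of_isConj_palD_zero {w : WD (m + 2)} (h : IsConj (palD m 0) w) :
    2 ≤ (csD (m + 2)).length w :=
  two_le_length_of_isConj _ (Fin.ne_of_lt (show m - 0 < m + 1 by omega)) h

theorem length_palD_zero : (csD (m + 2)).length (palD m 0) = 2 :=
  length_simple_mul_simple _ (Fin.ne_of_lt (show m - 0 < m + 1 by omega))

theorem palD_ne_one (d : ℕ) : palD m d ≠ 1 := by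
  intro h
  have h2 := two_le_length_of_isConj_palD_zero (h ▸ isConj_palD d)
  rw [(csD (m + 2)).length_one] at h2
  omega

end TypeD

section ForgetSigns

variable (m : ℕ)

theorem isLiftable_swap_min : (CoxeterMatrixD (m + 2)).IsLiftable fun i : Fin (m + 2) ↦
    Equiv.swap (min (i : ℕ) m) (min (i : ℕ) m + 1) := by
  intro i j
  dsimp only
  rw [CoxeterMatrixD_apply]
  split_ifs with hij hbond
  · rw [hij, pow_one, Equiv.swap_mul_self]
  · refine mul_pow_three_of_braid (Equiv.swap_mul_self _ _) (Equiv.swap_mul_self _ _) ?_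
    wlog hlt : i < j generalizing i j
    · exact (this j i (by tauto) (by tauto) (by omega)).symm
    have hj : min (j : ℕ) m = min (i : ℕ) m + 1 := by omega
    rw [hj, Equiv.swap_mul_swap_mul_swap (by omega) (by omega), Equiv.swap_comm (min (i : ℕ) m),
      Equiv.swap_comm _ (min (i : ℕ) m + 1 + 1), Equiv.swap_mul_swap_mul_swap (by omega) (by omega),
      Equiv.swap_comm]
  · refine mul_pow_two_of_commute (Equiv.swap_mul_self _ _) (Equiv.swap_mul_self _ _) ?_
    rcases eq_or_ne (min (i : ℕ) m) (min (j : ℕ) m) with hij | hij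
    · rw [hij]
      exact Commute.refl _
    · exact (Equiv.Perm.disjoint_swap_swap (by
        simp only [List.nodup_cons, List.mem_cons, List.not_mem_nil, or_false, not_or,
          List.nodup_nil, not_false_eq_true, and_true]; omega)).commute

/-- The homomorphism from the Weyl group of type `Dₙ`, `n = m + 2`, to permutations that forgets
the signs of a signed permutation. The letters are `0, …, m + 1`, inside `ℕ`, and both `s_{n-1}` and
`s_n` act as the transposition of `m` and `m + 1`. -/
def permD : WD (m + 2) →* Equiv.Perm ℕ := (csD (m + 2)).lift ⟨_, isLiftable_swap_min m⟩

variable {m}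

theorem permD_simple (i : Fin (m + 2)) :
    permD m ((csD (m + 2)).simple i) = Equiv.swap (min (i : ℕ) m) (min (i : ℕ) m + 1) :=
  (csD (m + 2)).lift_apply_simple (isLiftable_swap_min m) i

theorem permD_armD (i : ℕ) : permD m (armD m i) = Equiv.swap (m - i) (m - i + 1) := by
  rw [armD, permD_simple, min_eq_left (m.sub_le i)]

theorem permD_forkD : permD m (forkD m) = Equiv.swap m (m + 1) := by
  rw [forkD, permD_simple, Fin.val_last, min_eq_right m.le_succ]

theorem permD_palD (d : ℕ) : permD m (palD m d) = 1 := by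
  induction d with
  | zero => rw [palD, map_mul, permD_armD, permD_forkD, Nat.sub_zero, Equiv.swap_mul_self]
  | succ d ih => rw [palD, map_mul, map_mul, ih, mul_one, permD_armD, Equiv.swap_mul_self]

theorem permD_apply_zero_of_mem_paraD (hm : 1 ≤ m) {w : WD (m + 2)} (hw : w ∈ paraD (m + 2) 0) :
    permD m w 0 = 0 := by
  have hle : paraD (m + 2) 0 ≤ (MulAction.stabilizer (Equiv.Perm ℕ) 0).comap (permD m) := by
    rw [paraD, Subgroup.closure_le, Set.image_subset_iff]
    intro j hj
    have hj0 : (j : ℕ) ≠ 0 := Fin.val_ne_zero_iff.2 hj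
    change permD m _ 0 = 0
    rw [permD_simple, Equiv.swap_apply_of_ne_of_ne (by omega) (by omega)]
  exact hle hw

theorem inversionParity_armD_eq_zero {i : ℕ} {t : WD (m + 2)}
    (h : permD m t ≠ Equiv.swap (m - i) (m - i + 1)) :
    inversionParity (csD (m + 2)) (armD m i) t = 0 :=
  inversionParity_simple_of_ne _ fun ht ↦ h (ht ▸ permD_armD i)

theorem inversionParity_forkD_eq_zero {t : WD (m + 2)} (h : permD m t ≠ Equiv.swap m (m + 1)) :
    inversionParity (csD (m + 2)) (forkD m) t = 0 :=
  inversionParity_simple_of_ne _ fun ht ↦ h (ht ▸ permD_forkD)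

theorem inversionParity_palD_eq_zero {d : ℕ} (hd : d ≤ m) {t : WD (m + 2)}
    (ht : permD m t (m - d) = m - d) : inversionParity (csD (m + 2)) (palD m d) t = 0 := by
  have hne : permD m t ≠ Equiv.swap (m - d) (m - d + 1) := by
    intro h
    rw [h, Equiv.swap_apply_left] at ht
    omega
  have hconj {σ : Equiv.Perm ℕ} (h : permD m t ≠ σ) : σ * permD m t * σ⁻¹ ≠ σ := by
    rwa [ne_eq, mul_inv_eq_iff_eq_mul, mul_right_inj]
  cases d with
  | zero =>
    rw [palD, inversionParity_mul, inversionParity_forkD_eq_zero hne, zero_add,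
      inversionParity_armD_eq_zero]
    rw [map_mul, map_mul, map_inv, permD_forkD]
    exact hconj hne
  | succ d =>
    have hfix : permD m (armD m (d + 1) * t * (armD m (d + 1))⁻¹) (m - d) = m - d := by
      rw [map_mul, map_mul, map_inv, permD_armD, Equiv.swap_inv, Equiv.Perm.mul_apply,
        Equiv.Perm.mul_apply, ← show m - (d + 1) + 1 = m - d by omega, Equiv.swap_apply_right, ht,
        Equiv.swap_apply_left]
    rw [palD, mul_assoc, inversionParity_mul, inversionParity_mul, inversionParity_armD_eq_zero hne,
      inversionParity_palD_eq_zero (by omega) hfix, inversionParity_armD_eq_zero, add_zero,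
      add_zero]
    rw [map_mul, map_mul, map_mul, map_inv, map_mul, permD_palD, one_mul, permD_armD]
    exact hconj hne

theorem not_isRightDescent_palD (hm : 1 ≤ m) {j : Fin (m + 2)} (hj : j ≠ 0) :
    ¬(csD (m + 2)).IsRightDescent (palD m m) j := by
  have hj0 : (j : ℕ) ≠ 0 := Fin.val_ne_zero_iff.2 hj
  rw [not_isRightDescent_iff_inversionParity_eq_zero]
  refine inversionParity_palD_eq_zero le_rfl ?_
  rw [permD_simple, Equiv.swap_apply_of_ne_of_ne (by omega) (by omega)]

theorem isRightDescent_palD_zero (hm : 1 ≤ m) : (csD (m + 2)).IsRightDescent (palD m m) 0 := by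
  obtain ⟨j, hj⟩ := (csD (m + 2)).exists_rightDescent_of_ne_one (palD_ne_one m)
  obtain rfl : j = 0 := not_imp_comm.1 (not_isRightDescent_palD hm) (not_not_intro hj)
  exact hj

theorem palD_mul_simple_zero_mul_inv_notMem_paraD (hm : 1 ≤ m) :
    palD m m * (csD (m + 2)).simple 0 * (palD m m)⁻¹ ∉ paraD (m + 2) 0 := by
  intro h
  have hfix := permD_apply_zero_of_mem_paraD hm h
  rw [map_mul, map_mul, map_inv, permD_palD, one_mul, inv_one, mul_one, permD_simple,
    Fin.val_zero, Nat.zero_min, Equiv.swap_apply_left] at hfix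
  exact one_ne_zero hfix

theorem longest_mul_longest_eq_palD (hm : 1 ≤ m) {w₀ w₁ : WD (m + 2)}
    (hw₀ : ∀ v, (csD (m + 2)).length v ≤ (csD (m + 2)).length w₀) (hw₁ : w₁ ∈ paraD (m + 2) 0)
    (hw₁max : ∀ v ∈ paraD (m + 2) 0, (csD (m + 2)).length v ≤ (csD (m + 2)).length w₁) :
    w₁ * w₀ = palD m m := by
  refine longest_mul_longest_eq (csD (m + 2)) hw₀ hw₁ hw₁max
    (fun j hj ↦ ⟨not_isRightDescent_palD hm hj, palD_mul_simple_mul_inv_mem_paraD hm hj⟩)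
    fun j hj ↦ ?_
  obtain rfl : j = 0 := not_not.1 hj
  exact ⟨isRightDescent_palD_zero hm, palD_mul_simple_zero_mul_inv_notMem_paraD hm⟩

theorem min_eq_min_of_permD_simple_mul_simple_eq_one {i j : Fin (m + 2)}
    (h : permD m ((csD (m + 2)).simple i * (csD (m + 2)).simple j) = 1) :
    min (i : ℕ) m = min (j : ℕ) m := by
  rw [map_mul, permD_simple, permD_simple, mul_eq_one_iff_eq_inv, Equiv.swap_inv] at h
  have hi := congrArg (fun σ ↦ σ (min (i : ℕ) m)) h
  have hj := congrArg (fun σ ↦ σ (min (j : ℕ) m)) h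
  simp only [Equiv.swap_apply_def] at hi hj
  grind

theorem eq_palD_zero_of_isConj {w : WD (m + 2)} (h : IsConj (palD m 0) w)
    (hlen : (csD (m + 2)).length w = 2) : w = palD m 0 := by
  obtain ⟨i, j, rfl⟩ := exists_eq_simple_mul_simple_of_length_eq_two _ hlen
  have hmin : min (i : ℕ) m = min (j : ℕ) m := by
    have hconj := (permD m).map_isConj h
    rw [permD_palD, isConj_one_right] at hconj
    exact min_eq_min_of_permD_simple_mul_simple_eq_one hconj
  have hne : i ≠ j := by
    rintro rfl
    rw [(csD (m + 2)).simple_mul_simple_self, (csD (m + 2)).length_one] at hlen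
    exact two_ne_zero hlen.symm
  rcases hne.lt_or_gt with hlt | hgt
  · have hi : i = ⟨m - 0, by omega⟩ := Fin.ext (by dsimp only; omega)
    have hj : j = Fin.last (m + 1) := Fin.ext (by rw [Fin.val_last]; omega)
    rw [hi, hj]
    rfl
  · have hj : j = ⟨m - 0, by omega⟩ := Fin.ext (by dsimp only; omega)
    have hi : i = Fin.last (m + 1) := Fin.ext (by rw [Fin.val_last]; omega)
    rw [hj, hi]
    exact (commute_armD_forkD zero_ne_one m.zero_le).symm.eq

end ForgetSigns

section Segments

theorem segD_of_lt {n a b : ℕ} (h : b < a) : segD n a b = 1 := by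
  rw [segD, List.filter_eq_nil_iff.2 fun k _ ↦ by simp only [decide_eq_true_eq]; omega,
    List.map_nil, List.prod_nil]

theorem filter_finRange_eq_cons {n b : ℕ} (i : Fin n) (hb : (i : ℕ) + 1 ≤ b) :
    (List.finRange n).filter (fun k : Fin n ↦ (i : ℕ) + 1 ≤ (k : ℕ) + 1 ∧ (k : ℕ) + 1 ≤ b) =
      i :: (List.finRange n).filter
        fun k : Fin n ↦ (i : ℕ) + 2 ≤ (k : ℕ) + 1 ∧ (k : ℕ) + 1 ≤ b := by
  have hsorted := List.pairwise_lt_finRange n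
  refine List.Perm.eq_of_pairwise (le := (· < ·)) (fun _ _ _ _ h₁ h₂ ↦ absurd h₂ h₁.asymm)
    (hsorted.filter _) (List.pairwise_cons.2 ⟨fun k hk ↦ ?_, hsorted.filter _⟩) ?_
  · simp only [List.mem_filter, decide_eq_true_eq] at hk
    omega
  · rw [List.perm_ext_iff_of_nodup ((List.nodup_finRange n).filter _)
      (List.nodup_cons.2 ⟨by simp, (List.nodup_finRange n).filter _⟩)]
    intro k
    simp only [List.mem_cons, List.mem_filter, List.mem_finRange, true_and, decide_eq_true_eq,
      Fin.ext_iff]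
    omega

theorem segD_eq_simple_mul {n b : ℕ} (i : Fin n) (hb : (i : ℕ) + 1 ≤ b) :
    segD n (i + 1) b = (csD n).simple i * segD n (i + 2) b := by
  rw [segD, filter_finRange_eq_cons i hb, List.map_cons, List.prod_cons, segD]

theorem segD_eq_armD_mul {m d b : ℕ} (hb : m - d + 1 ≤ b) :
    segD (m + 2) (m - d + 1) b = armD m d * segD (m + 2) (m - d + 2) b :=
  segD_eq_simple_mul ⟨m - d, by omega⟩ hb

theorem segD_mul_inv_eq_palD {m d : ℕ} (hd : d ≤ m) :
    segD (m + 2) (m - d + 1) m * (segD (m + 2) (m - d + 1) (m + 2))⁻¹ = palD m d := by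
  induction d with
  | zero =>
    have hfork : segD (m + 2) (m + 2) (m + 2) = forkD m := by
      refine (segD_eq_simple_mul (Fin.last (m + 1)) le_rfl).trans ?_
      rw [segD_of_lt (by simp), mul_one, forkD]
    have harm : Commute (armD m 0) (forkD m) := commute_armD_forkD zero_ne_one m.zero_le
    rw [segD_of_lt (by omega), segD_eq_armD_mul (by omega), Nat.sub_zero, hfork, one_mul,
      harm.eq, mul_inv_rev, armD, forkD, (csD _).inv_simple, (csD _).inv_simple, palD, armD, forkD]
  | succ d ih =>
    have hshift : m - (d + 1) + 2 = m - d + 1 := by omega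
    rw [segD_eq_armD_mul (by omega), segD_eq_armD_mul (by omega), hshift, mul_inv_rev,
      ← mul_assoc, mul_assoc (armD m (d + 1)), ih (by omega), palD]
    congr 1
    exact (csD (m + 2)).inv_simple _

end Segments

/-- In the Weyl group of type `Dₙ` (`n ≥ 4`, Bourbaki labels),
`w_{1,0}·w₀ = (s_1 ⋯ s_{n−2})·(s_1 ⋯ s_{n−2} s_{n−1} s_n)⁻¹`, and the set of minimal
length elements of the conjugacy class of `w_{1,0}·w₀` is exactly `{s_{n−1}·s_n}`; in
particular the minimal length in this conjugacy class is `2`. -/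
theorem typeD_w10_mul_w0 (n : ℕ) (hn : 4 ≤ n)
    (w₀ : WD n) (hw₀ : ∀ v : WD n, (csD n).length v ≤ (csD n).length w₀)
    (w₁ : WD n) (hw₁ : w₁ ∈ paraD n ⟨0, by omega⟩)
    (hw₁max : ∀ v ∈ paraD n ⟨0, by omega⟩, (csD n).length v ≤ (csD n).length w₁) :
    w₁ * w₀ = segD n 1 (n - 2) * (segD n 1 n)⁻¹ ∧
    {w : WD n | IsConj (w₁ * w₀) w ∧
        ∀ v : WD n, IsConj (w₁ * w₀) v → (csD n).length w ≤ (csD n).length v}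
      = {(csD n).simple ⟨n - 2, by omega⟩ * (csD n).simple ⟨n - 1, by omega⟩} ∧
    (csD n).length ((csD n).simple ⟨n - 2, by omega⟩ * (csD n).simple ⟨n - 1, by omega⟩)
      = 2 := by
  obtain ⟨m, rfl⟩ := Nat.exists_eq_add_of_le' (show 2 ≤ n by omega)
  have hpal : w₁ * w₀ = palD m m := longest_mul_longest_eq_palD (by omega) hw₀ hw₁ hw₁max
  have hconj : IsConj (w₁ * w₀) (palD m 0) := hpal ▸ (isConj_palD m).symm
  have htwo {w : WD (m + 2)} (hw : IsConj (w₁ * w₀) w) : 2 ≤ (csD (m + 2)).length w :=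
    two_le_length_of_isConj_palD_zero (hconj.symm.trans hw)
  refine ⟨?_, Set.ext fun w ↦ ⟨fun ⟨hw, hmin⟩ ↦ ?_, ?_⟩, length_palD_zero⟩
  · rw [hpal, ← segD_mul_inv_eq_palD le_rfl, Nat.sub_self]
    rfl
  · exact eq_palD_zero_of_isConj (hconj.symm.trans hw)
      (((hmin _ hconj).trans_eq length_palD_zero).antisymm (htwo hw))
  · rintro rfl
    exact ⟨hconj, fun v hv ↦ length_palD_zero.trans_le (htwo hv)⟩
end
end

section
/- Let W be the Weyl group of type E_6 with simple reflections s_1, …, s_6 labeled as in Bourbaki. Then w_{1,0}·w_0 = s_1 s_3 s_4 s_5 s_6 s_2 s_4 s_5 s_3 s_4 s_1 s_3 s_2 s_4 s_5 s_6, and the set of elements of minimal length in the conjugacy class of w_{1,0}·w_0 equals the set of Coxeter elements of the standard parabolic subgroup W_J with J = {1, 3, 5, 6}; in particular, the minimal length in this conjugacy class is 4. -/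
noncomputable section
open CoxeterMatrix

/-- The Weyl group of type `E₆`, given by its Coxeter presentation; the index `j : Fin 6`
corresponds to the Bourbaki label `j + 1`. -/
abbrev WE6 := (E₆).Group

/-- The canonical Coxeter system of type `E₆`. -/
def csE6 : CoxeterSystem E₆ WE6 := (E₆).toCoxeterSystem

/-- The standard parabolic subgroup of the type-`E₆` Weyl group generated by all simple
reflections except the one with (zero-based) index `i`. -/
def paraE6 (i : Fin 6) : Subgroup WE6 :=
  Subgroup.closure (csE6.simple '' {j : Fin 6 | j ≠ i})

/-! If `w₀` and `w₁` are longest in `W` and in a standard parabolic subgroup `W_J`, they are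
recognised by the action on weights: for a strictly dominant weight `μ`, `i` is a left descent of
`w` exactly when `⟨w μ, αᵢ^∨⟩ < 0`. Hence an element of `W` is determined by its value on `μ`, and
an element of `W_J` that makes `μ` negative on `J` is the longest one; this reduces the word
identities to evaluations at `μ = (1, …, 1)`.

For the minimal lengths, let `θ` be the class of a weight modulo the root lattice, which `W`
preserves. The fundamental weights with `θ ≠ 0` are `ϖ₁, ϖ₃, ϖ₅, ϖ₆`. A word that omits the letter
`k` fixes `ϖ_k`, whereas `s₁s₃s₅s₆`, and so each of its conjugates, only fixes weights with `θ = 0`.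
Therefore every word of an element of its class contains all of `1, 3, 5, 6`. -/

section BraidRelations

variable {B W : Type*} [Group W] {M : CoxeterMatrix B} (cs : CoxeterSystem M W) {i j : B}

theorem simple_mul_simple_comm (h : M i j = 2) :
    cs.simple i * cs.simple j = cs.simple j * cs.simple i := by
  simpa [CoxeterSystem.braidWord, h, M.symmetric j i, CoxeterSystem.alternatingWord,
    cs.wordProd_cons] using cs.wordProd_braidWord_eq i j

theorem simple_mul_simple_mul_simple_braid (h : M i j = 3) :
    cs.simple i * (cs.simple j * cs.simple i) = cs.simple j * (cs.simple i * cs.simple j) := by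
  simpa [CoxeterSystem.braidWord, h, M.symmetric j i, CoxeterSystem.alternatingWord,
    cs.wordProd_cons] using (cs.wordProd_braidWord_eq i j).symm

theorem not_isLeftDescent_of_length_eq_add_two (h : M i j = 2) {w : W}
    (hw : cs.length (cs.simple i * (cs.simple j * w)) = cs.length w + 2) :
    ¬cs.IsLeftDescent w i := by
  have hle := cs.length_mul_le (cs.simple j) (cs.simple i * w)
  rw [← mul_assoc, ← simple_mul_simple_comm cs h, mul_assoc, hw, cs.length_simple] at hle
  rw [CoxeterSystem.IsLeftDescent]
  lia

theorem not_isLeftDescent_of_length_eq_add_three (h : M i j = 3) {w : W}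
    (hw : cs.length (cs.simple i * (cs.simple j * (cs.simple i * w))) = cs.length w + 3) :
    ¬cs.IsLeftDescent w j := by
  have hle := cs.length_mul_le (cs.simple j * cs.simple i) (cs.simple j * w)
  rw [mul_assoc, ← mul_assoc (cs.simple i), ← mul_assoc (cs.simple j),
    ← simple_mul_simple_mul_simple_braid cs h, mul_assoc, mul_assoc, hw] at hle
  have hle' := cs.length_mul_le (cs.simple j) (cs.simple i)
  rw [cs.length_simple, cs.length_simple] at hle'
  rw [CoxeterSystem.IsLeftDescent]
  lia

end BraidRelations

section WeightRepresentation

variable {B W : Type*} [Group W] {M : CoxeterMatrix B}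

/-- A Coxeter matrix is simply laced if its off-diagonal entries are all `2` or `3`. -/
class IsSimplyLaced (M : CoxeterMatrix B) : Prop where
  eq_two_or_eq_three : ∀ i j, i ≠ j → M i j = 2 ∨ M i j = 3

/-- The simple root `αᵢ` of a simply laced Coxeter matrix, in the coordinates of the weight lattice
with respect to the fundamental weights: the `i`-th row of the Cartan matrix. -/
def simpleRoot (M : CoxeterMatrix B) (i : B) : B → ℤ := fun j =>
  if M i j = 1 then 2 else if M i j = 3 then -1 else 0

/-- The simple reflection `μ ↦ μ - ⟨μ, αᵢ^∨⟩ αᵢ` of the weight lattice `B → ℤ`, whose elements are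
given by their coordinates `μ i = ⟨μ, αᵢ^∨⟩` with respect to the fundamental weights. -/
def weightReflection (M : CoxeterMatrix B) (i : B) : Module.End ℤ (B → ℤ) :=
  Module.preReflection (simpleRoot M i) (LinearMap.proj i)

theorem simpleRoot_self (i : B) : simpleRoot M i i = 2 := by
  simp [simpleRoot]

theorem simpleRoot_of_eq_two {i j : B} (h : M i j = 2) : simpleRoot M i j = 0 := by
  simp [simpleRoot, h]

theorem simpleRoot_of_eq_three {i j : B} (h : M i j = 3) : simpleRoot M i j = -1 := by
  simp [simpleRoot, h]

theorem weightReflection_apply (i : B) (μ : B → ℤ) :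
    weightReflection M i μ = μ - μ i • simpleRoot M i :=
  Module.preReflection_apply ..

theorem weightReflection_apply_apply (i j : B) (μ : B → ℤ) :
    weightReflection M i μ j = μ j - μ i * simpleRoot M i j := by
  simp [weightReflection_apply]

theorem weightReflection_apply_self (i : B) (μ : B → ℤ) : weightReflection M i μ i = -μ i := by
  rw [weightReflection_apply_apply, simpleRoot_self]
  ring

theorem weightReflection_apply_of_eq_two {i j : B} (h : M i j = 2) (μ : B → ℤ) :
    weightReflection M i μ j = μ j := by
  simp [weightReflection_apply_apply, simpleRoot_of_eq_two h]

theorem weightReflection_apply_of_eq_three {i j : B} (h : M i j = 3) (μ : B → ℤ) :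
    weightReflection M i μ j = μ j + μ i := by
  simp [weightReflection_apply_apply, simpleRoot_of_eq_three h]

theorem weightReflection_mul_self (i : B) : weightReflection M i * weightReflection M i = 1 :=
  LinearMap.ext (Module.involutive_preReflection (simpleRoot_self i))

theorem isLiftable_weightReflection [IsSimplyLaced M] : M.IsLiftable (weightReflection M) := by
  intro i j
  obtain rfl | hij := eq_or_ne i j
  · rw [M.diagonal, pow_one, weightReflection_mul_self]
  obtain h | h := IsSimplyLaced.eq_two_or_eq_three (M := M) i j hij
  all_goals
    ext1 μ
    ext k
    have hji := M.symmetric i j ▸ h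
    simp only [h, pow_succ, pow_zero, one_mul, Module.End.mul_apply, Module.End.one_apply,
      weightReflection_apply_apply, simpleRoot_self]
    simp only [simpleRoot_of_eq_two, simpleRoot_of_eq_three, h, hji]
    ring

/-- The action of a simply laced Coxeter group on its weight lattice. -/
def weightRep [IsSimplyLaced M] (cs : CoxeterSystem M W) : Representation ℤ W (B → ℤ) :=
  cs.lift ⟨weightReflection M, isLiftable_weightReflection⟩

variable [IsSimplyLaced M] (cs : CoxeterSystem M W)

theorem weightRep_simple (i : B) : weightRep cs (cs.simple i) = weightReflection M i :=
  cs.lift_apply_simple isLiftable_weightReflection i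

theorem weightRep_simple_mul (i : B) (w : W) (μ : B → ℤ) :
    weightRep cs (cs.simple i * w) μ = weightReflection M i (weightRep cs w μ) := by
  rw [map_mul, Module.End.mul_apply, weightRep_simple]

/-- The weight `w ρ` for the product `w` of the word `ω`, where `ρ = (1, …, 1)` is the sum of the
fundamental weights. By `wordProd_eq_wordProd_iff` it is a computable normal form of `w`. -/
def wordWeight (M : CoxeterMatrix B) (ω : List B) : B → ℤ :=
  ω.foldr (fun i μ => weightReflection M i μ) 1

theorem weightRep_wordProd_one (ω : List B) : weightRep cs (cs.wordProd ω) 1 = wordWeight M ω := by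
  induction ω with
  | nil => simp [wordWeight]
  | cons i ω ih =>
    rw [cs.wordProd_cons, weightRep_simple_mul, ih]
    rfl

theorem weightRep_inv_apply_weightRep (w : W) (μ : B → ℤ) :
    weightRep cs w⁻¹ (weightRep cs w μ) = μ :=
  Representation.inv_self_apply ..

end WeightRepresentation

section Descents

variable {B W : Type*} [Group W] {M : CoxeterMatrix B} [IsSimplyLaced M]
variable {cs : CoxeterSystem M W} {μ : B → ℤ}

theorem weightRep_apply_pos (hμ : ∀ i, 0 < μ i) {w : W} {i : B} (hw : ¬cs.IsLeftDescent w i) :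
    0 < weightRep cs w μ i := by
  induction h : cs.length w using Nat.strong_induction_on generalizing w i with | _ n ih
  subst h
  obtain rfl | hw1 := eq_or_ne w 1
  · simpa using hμ i
  obtain ⟨j, hj⟩ := cs.exists_leftDescent_of_ne_one hw1
  have hij : i ≠ j := fun hij => hw (hij ▸ hj)
  obtain ⟨v, rfl⟩ : ∃ v, w = cs.simple j * v := ⟨cs.simple j * w, by simp⟩
  rw [cs.isLeftDescent_iff, cs.simple_mul_simple_cancel_left] at hj
  rw [cs.not_isLeftDescent_iff] at hw
  rw [weightRep_simple_mul]
  obtain h | h := IsSimplyLaced.eq_two_or_eq_three (M := M) i j hij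
  · rw [weightReflection_apply_of_eq_two (M.symmetric i j ▸ h)]
    exact ih _ (by lia) (not_isLeftDescent_of_length_eq_add_two cs h (by lia)) rfl
  rw [weightReflection_apply_of_eq_three (M.symmetric i j ▸ h)]
  by_cases hv : cs.IsLeftDescent v i
  · obtain ⟨u, rfl⟩ : ∃ u, v = cs.simple i * u := ⟨cs.simple i * v, by simp⟩
    rw [cs.isLeftDescent_iff, cs.simple_mul_simple_cancel_left] at hv
    rw [weightRep_simple_mul, weightReflection_apply_self, weightReflection_apply_of_eq_three h,
      neg_add_cancel_comm_assoc]
    exact ih _ (by lia) (not_isLeftDescent_of_length_eq_add_three cs h (by lia)) rfl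
  · have hvj : ¬cs.IsLeftDescent v j := cs.not_isLeftDescent_iff.mpr hj.symm
    exact add_pos (ih _ (by lia) hv rfl) (ih _ (by lia) hvj rfl)

theorem weightRep_apply_neg (hμ : ∀ i, 0 < μ i) {w : W} {i : B} (hw : cs.IsLeftDescent w i) :
    weightRep cs w μ i < 0 := by
  have hpos := weightRep_apply_pos hμ (cs.isLeftDescent_iff_not_isLeftDescent_mul.mp hw)
  rwa [weightRep_simple_mul, weightReflection_apply_self, neg_pos] at hpos

theorem eq_one_of_weightRep_pos (hμ : ∀ i, 0 < μ i) {w : W} (hw : ∀ i, 0 < weightRep cs w μ i) :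
    w = 1 := by
  by_contra hw1
  obtain ⟨i, hi⟩ := cs.exists_leftDescent_of_ne_one hw1
  exact (hw i).not_gt (weightRep_apply_neg hμ hi)

theorem eq_of_weightRep_eq (hμ : ∀ i, 0 < μ i) {v w : W}
    (h : weightRep cs v μ = weightRep cs w μ) : v = w := by
  rw [← inv_mul_eq_one]
  refine eq_one_of_weightRep_pos (cs := cs) hμ ?_
  rwa [map_mul, Module.End.mul_apply, ← h, weightRep_inv_apply_weightRep]

theorem wordProd_eq_wordProd_iff {ω ω' : List B} :
    cs.wordProd ω = cs.wordProd ω' ↔ wordWeight M ω = wordWeight M ω' := by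
  rw [← weightRep_wordProd_one cs, ← weightRep_wordProd_one cs]
  exact ⟨congrArg (weightRep cs · 1), eq_of_weightRep_eq fun _ => one_pos⟩

end Descents

section Parabolic

variable {B W : Type*} [Group W] {M : CoxeterMatrix B} {cs : CoxeterSystem M W} {J : Set B}

/-- The standard parabolic subgroup `W_J`. -/
abbrev standardParabolic (cs : CoxeterSystem M W) (J : Set B) : Subgroup W :=
  Subgroup.closure (cs.simple '' J)

/-- `w` is an element of maximal length of the standard parabolic subgroup `W_J`; for `J` the set of
all generators, this says that `w` is a longest element of `W`. -/
structure IsLongestIn (cs : CoxeterSystem M W) (J : Set B) (w : W) : Prop where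
  mem : w ∈ standardParabolic cs J
  length_le : ∀ v ∈ standardParabolic cs J, cs.length v ≤ cs.length w

theorem mem_standardParabolic_univ (w : W) : w ∈ standardParabolic cs Set.univ := by
  simp [standardParabolic, cs.subgroup_closure_range_simple]

theorem wordProd_mem_standardParabolic {ω : List B} (hω : ∀ j ∈ ω, j ∈ J) :
    cs.wordProd ω ∈ standardParabolic cs J := by
  refine list_prod_mem fun x hx => ?_
  obtain ⟨j, hj, rfl⟩ := List.mem_map.mp hx
  exact Subgroup.subset_closure ⟨j, hω j hj, rfl⟩

theorem IsLongestIn.inv {w : W} (hw : IsLongestIn cs J w) : IsLongestIn cs J w⁻¹ :=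
  ⟨inv_mem hw.mem, by simpa only [cs.length_inv] using hw.length_le⟩

theorem IsLongestIn.isLeftDescent {w : W} (hw : IsLongestIn cs J w) {j : B} (hj : j ∈ J) :
    cs.IsLeftDescent w j :=
  (hw.length_le _ (mul_mem (Subgroup.subset_closure ⟨j, hj, rfl⟩) hw.mem)).lt_of_ne
    (cs.length_simple_mul_ne w j)

variable [IsSimplyLaced M] {μ : B → ℤ}

theorem weightRep_eq_self_of_mem_standardParabolic {w : W} (hw : w ∈ standardParabolic cs J)
    (hμ : ∀ j ∈ J, μ j = 0) : weightRep cs w μ = μ := by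
  induction hw using Subgroup.closure_induction with
  | mem x hx =>
    obtain ⟨j, hj, rfl⟩ := hx
    rw [weightRep_simple, weightReflection_apply, hμ j hj, zero_smul, sub_zero]
  | one => simp
  | mul x y _ _ hx hy => rw [map_mul, Module.End.mul_apply, hy, hx]
  | inv x _ hx => nth_rw 1 [← hx, weightRep_inv_apply_weightRep]

theorem mem_of_weightRep_single_ne [DecidableEq B] {ω : List B} {k : B}
    (h : weightRep cs (cs.wordProd ω) (Pi.single k 1) ≠ Pi.single k 1) : k ∈ ω := by
  contrapose! h
  exact weightRep_eq_self_of_mem_standardParabolic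
    (wordProd_mem_standardParabolic (J := {j | j ∈ ω}) fun _ hj => hj)
    fun j hj => Pi.single_eq_of_ne (ne_of_mem_of_not_mem hj h) 1

theorem eq_one_of_mem_standardParabolic_of_weightRep_pos {w : W}
    (hw : w ∈ standardParabolic cs J) (hμ : ∀ j ∈ J, 0 < μ j)
    (hwμ : ∀ j ∈ J, 0 < weightRep cs w μ j) : w = 1 := by
  classical
  -- A weight vanishing on `J` is fixed by `w`, so it can be added to `μ` and to `w μ` at once.
  let ν : B → ℤ := fun k => if k ∈ J then 0 else 1 + |μ k| + |weightRep cs w μ k|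
  have hwν : weightRep cs w ν = ν :=
    weightRep_eq_self_of_mem_standardParabolic hw fun j hj => if_pos hj
  refine eq_one_of_weightRep_pos (cs := cs) (μ := μ + ν) (fun k => ?_) fun k => ?_
  · by_cases hk : k ∈ J
    · simpa [ν, hk] using hμ k hk
    · simp only [Pi.add_apply, ν, hk, if_false]
      linarith [neg_abs_le (μ k), abs_nonneg (weightRep cs w μ k)]
  · rw [map_add, hwν]
    by_cases hk : k ∈ J
    · simpa [ν, hk] using hwμ k hk
    · simp only [Pi.add_apply, ν, hk, if_false]
      linarith [neg_abs_le (weightRep cs w μ k), abs_nonneg (μ k)]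

theorem eq_of_mem_standardParabolic_of_weightRep_neg {v w : W}
    (hv : v ∈ standardParabolic cs J) (hw : w ∈ standardParabolic cs J)
    (hvμ : ∀ j ∈ J, weightRep cs v μ j < 0) (hwμ : ∀ j ∈ J, weightRep cs w μ j < 0) : v = w := by
  rw [← mul_inv_eq_one]
  refine eq_one_of_mem_standardParabolic_of_weightRep_pos (μ := -weightRep cs w μ)
    (mul_mem hv (inv_mem hw)) (fun j hj => neg_pos.mpr (hwμ j hj)) fun j hj => ?_
  rw [map_neg, map_mul, Module.End.mul_apply, weightRep_inv_apply_weightRep]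
  exact neg_pos.mpr (hvμ j hj)

theorem IsLongestIn.eq_of_weightRep_neg {v w : W} (hw : IsLongestIn cs J w)
    (hv : v ∈ standardParabolic cs J) (hμ : ∀ i, 0 < μ i)
    (hvμ : ∀ j ∈ J, weightRep cs v μ j < 0) : w = v :=
  eq_of_mem_standardParabolic_of_weightRep_neg hw.mem hv
    (fun _ hj => weightRep_apply_neg hμ (hw.isLeftDescent hj)) hvμ

theorem IsLongestIn.eq_wordProd {w : W} (hw : IsLongestIn cs J w) {ω : List B}
    (hω : ∀ j ∈ ω, j ∈ J) (hneg : ∀ j ∈ J, wordWeight M ω j < 0) : w = cs.wordProd ω :=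
  hw.eq_of_weightRep_neg (μ := 1) (wordProd_mem_standardParabolic hω) (fun _ => one_pos)
    (by simpa only [weightRep_wordProd_one] using hneg)

theorem IsLongestIn.mul_self {w : W} (hw : IsLongestIn cs J w) : w * w = 1 := by
  rw [mul_eq_one_iff_eq_inv]
  exact hw.eq_of_weightRep_neg hw.inv.mem (fun _ => one_pos) fun _ hj =>
    weightRep_apply_neg (fun _ => one_pos) (hw.inv.isLeftDescent hj)

end Parabolic

section CoxeterWords

variable {B : Type*} {J : Finset B} {l : List B}

/-- `l` lists the elements of `J` without repetition; its product is then a Coxeter element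
of `W_J`. -/
def IsCoxeterWord (J : Finset B) (l : List B) : Prop :=
  l.Nodup ∧ ∀ j, j ∈ l ↔ j ∈ J

theorem isCoxeterWord_iff_toFinset_eq [DecidableEq B] :
    IsCoxeterWord J l ↔ l.Nodup ∧ l.toFinset = J := by
  simp only [IsCoxeterWord, Finset.ext_iff, List.mem_toFinset]

theorem IsCoxeterWord.length_eq (hl : IsCoxeterWord J l) : l.length = J.card := by
  classical
  obtain ⟨hnodup, rfl⟩ := isCoxeterWord_iff_toFinset_eq.mp hl
  exact (List.toFinset_card_of_nodup hnodup).symm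

theorem isCoxeterWord_of_subset_toFinset [DecidableEq B] (hJ : J ⊆ l.toFinset)
    (hl : l.length ≤ J.card) : IsCoxeterWord J l := by
  have hcard : l.toFinset.card = l.length :=
    l.toFinset_card_le.antisymm (hl.trans (Finset.card_le_card hJ))
  exact isCoxeterWord_iff_toFinset_eq.mpr
    ⟨Multiset.toFinset_card_eq_card_iff_nodup.mp hcard,
      (Finset.eq_of_subset_of_card_le hJ (hcard.trans_le hl)).symm⟩

end CoxeterWords

section WeightClasses

variable {B W : Type*} [Group W] {M : CoxeterMatrix B} [IsSimplyLaced M]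
variable {cs : CoxeterSystem M W} {A : Type*} [AddCommGroup A] {θ : (B → ℤ) →+ A}

theorem map_weightRep_of_map_simpleRoot_eq_zero (hθ : ∀ i, θ (simpleRoot M i) = 0) (w : W)
    (μ : B → ℤ) : θ (weightRep cs w μ) = θ μ := by
  induction w using cs.simple_induction_left with
  | one => simp
  | mul_simple_left w i ih =>
    rw [weightRep_simple_mul, weightReflection_apply, map_sub, map_zsmul, hθ, smul_zero, sub_zero,
      ih]

theorem map_eq_zero_of_isConj (hθ : ∀ i, θ (simpleRoot M i) = 0) {v w : W} (hvw : IsConj v w)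
    (hv : ∀ μ, weightRep cs v μ = μ → θ μ = 0) {μ : B → ℤ} (hμ : weightRep cs w μ = μ) :
    θ μ = 0 := by
  obtain ⟨g, rfl⟩ := isConj_iff.mp hvw
  rw [← map_weightRep_of_map_simpleRoot_eq_zero (cs := cs) hθ g⁻¹ μ]
  refine hv _ ?_
  rw [map_mul, map_mul, Module.End.mul_apply, Module.End.mul_apply] at hμ
  nth_rw 2 [← hμ]
  rw [weightRep_inv_apply_weightRep]

end WeightClasses

section TypeE6

instance : IsSimplyLaced E₆ where
  eq_two_or_eq_three := by simp [E₆, Fin.forall_fin_succ]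

/-- A reduced word of the longest element of the parabolic subgroup of type `D₅`, as a product of
the longest minimal coset representatives along the chain `A₁ ⊂ A₂ ⊂ A₃ ⊂ A₄ ⊂ D₅`. -/
def longestWordD5 : List (Fin 6) :=
  [2] ++ [3, 2] ++ [4, 3, 2] ++ [5, 4, 3, 2] ++ [1, 3, 2, 4, 3, 1, 5, 4, 3, 2]

/-- The word of `w_{1,0} · w₀`, the longest minimal right coset representative of `D₅` in `E₆`. -/
def cosetWordE6 : List (Fin 6) := [0, 2, 3, 4, 5, 1, 3, 4, 2, 3, 0, 2, 1, 3, 4, 5]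

/-- The class of a weight of type `E₆` modulo the root lattice, the quotient being identified with
`ℤ/3` so that the class of the first fundamental weight is `1`. -/
def weightClassE6 : (Fin 6 → ℤ) →+ ZMod 3 :=
  (Int.castAddHom (ZMod 3)).comp <|
    Pi.evalAddMonoidHom (fun _ => ℤ) 0 - Pi.evalAddMonoidHom (fun _ => ℤ) 2 +
      Pi.evalAddMonoidHom (fun _ => ℤ) 4 - Pi.evalAddMonoidHom (fun _ => ℤ) 5

theorem IsLongestIn.eq_wordProd_longestWordD5 {w : WE6} (hw : IsLongestIn csE6 {j | j ≠ 0} w) :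
    w = csE6.wordProd longestWordD5 :=
  hw.eq_wordProd (show ∀ j ∈ longestWordD5, j ≠ 0 by decide)
    (show ∀ j ≠ 0, wordWeight E₆ longestWordD5 j < 0 by decide +kernel)

theorem IsLongestIn.eq_wordProd_longestWordE6 {w : WE6} (hw : IsLongestIn csE6 Set.univ w) :
    w = csE6.wordProd (longestWordD5 ++ cosetWordE6) := by
  have hneg : ∀ j, wordWeight E₆ (longestWordD5 ++ cosetWordE6) j < 0 := by decide +kernel
  exact hw.eq_wordProd (fun _ _ => trivial) fun j _ => hneg j

theorem isConj_coxeterWord :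
    IsConj (csE6.wordProd cosetWordE6) (csE6.wordProd [0, 2, 4, 5]) := by
  refine isConj_iff.mpr ⟨csE6.wordProd [0, 4, 3, 2, 1, 3, 4, 5, 3, 2, 0], ?_⟩
  rw [mul_inv_eq_iff_eq_mul, ← csE6.wordProd_append, ← csE6.wordProd_append]
  exact wordProd_eq_wordProd_iff.mpr (by decide +kernel)

theorem IsCoxeterWord.isConj_cosetWordE6 {l : List (Fin 6)} (hl : IsCoxeterWord {0, 2, 4, 5} l) :
    IsConj (csE6.wordProd cosetWordE6) (csE6.wordProd l) := by
  have hperm : l ∈ ([0, 2, 4, 5] : List (Fin 6)).permutations' := by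
    rw [List.mem_permutations', List.perm_ext_iff_of_nodup hl.1 (by decide)]
    simpa using hl.2
  -- Conjugation by `s₁` swaps the two Coxeter elements of the first `A₂`, conjugation by `s₅` those
  -- of the second.
  have hconj : ∀ l ∈ ([0, 2, 4, 5] : List (Fin 6)).permutations',
      ∃ x ∈ ([[], [0], [4], [0, 4]] : List (List (Fin 6))),
        wordWeight E₆ (x ++ [0, 2, 4, 5]) = wordWeight E₆ (l ++ x) := by
    decide +kernel
  obtain ⟨x, -, hx⟩ := hconj l hperm
  have hmul := (wordProd_eq_wordProd_iff (cs := csE6)).mpr hx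
  rw [csE6.wordProd_append, csE6.wordProd_append] at hmul
  exact isConj_coxeterWord.trans
    (isConj_iff.mpr ⟨csE6.wordProd x, mul_inv_eq_iff_eq_mul.mpr hmul⟩)

theorem weightClassE6_simpleRoot : ∀ i, weightClassE6 (simpleRoot E₆ i) = 0 := by
  decide +kernel

theorem weightClassE6_eq_zero_of_fixed {μ : Fin 6 → ℤ}
    (hμ : weightRep csE6 (csE6.wordProd [0, 2, 4, 5]) μ = μ) : weightClassE6 μ = 0 := by
  simp only [CoxeterSystem.wordProd_cons, CoxeterSystem.wordProd_nil, weightRep_simple_mul,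
    map_one, Module.End.one_apply] at hμ
  have h0 : -(μ 0 + μ 2) = μ 0 := by
    simpa [weightReflection_apply_self, weightReflection_apply_apply, simpleRoot, E₆]
      using congrFun hμ 0
  have h2 : μ 0 = μ 2 := by
    simpa [weightReflection_apply_self, weightReflection_apply_apply, simpleRoot, E₆]
      using congrFun hμ 2
  have h4 : -(μ 4 + μ 5) = μ 4 := by
    simpa [weightReflection_apply_self, weightReflection_apply_apply, simpleRoot, E₆]
      using congrFun hμ 4
  have h5 : μ 4 = μ 5 := by
    simpa [weightReflection_apply_self, weightReflection_apply_apply, simpleRoot, E₆]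
      using congrFun hμ 5
  have hμ0 : μ 0 = 0 := by lia
  have hμ2 : μ 2 = 0 := by lia
  have hμ4 : μ 4 = 0 := by lia
  have hμ5 : μ 5 = 0 := by lia
  simp [weightClassE6, hμ0, hμ2, hμ4, hμ5]

theorem subset_toFinset_of_isConj {ω : List (Fin 6)}
    (h : IsConj (csE6.wordProd cosetWordE6) (csE6.wordProd ω)) : {0, 2, 4, 5} ⊆ ω.toFinset := by
  have hclass : ∀ k ∈ ({0, 2, 4, 5} : Finset (Fin 6)), weightClassE6 (Pi.single k 1) ≠ 0 := by
    decide +kernel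
  intro k hk
  rw [List.mem_toFinset]
  refine mem_of_weightRep_single_ne (cs := csE6) fun hfix => hclass k hk ?_
  exact map_eq_zero_of_isConj weightClassE6_simpleRoot (isConj_coxeterWord.symm.trans h)
    (fun _ => weightClassE6_eq_zero_of_fixed) hfix

theorem four_le_length_of_isConj {w : WE6} (h : IsConj (csE6.wordProd cosetWordE6) w) :
    4 ≤ csE6.length w := by
  obtain ⟨ω, hω, rfl⟩ := csE6.exists_isReduced w
  calc
    4 ≤ ω.toFinset.card := Finset.card_le_card (subset_toFinset_of_isConj h)
    _ ≤ ω.length := ω.toFinset_card_le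
    _ = csE6.length (csE6.wordProd ω) := hω.eq.symm

theorem IsCoxeterWord.length_wordProd_E6 {l : List (Fin 6)} (hl : IsCoxeterWord {0, 2, 4, 5} l) :
    csE6.length (csE6.wordProd l) = 4 :=
  le_antisymm ((csE6.length_wordProd_le l).trans_eq hl.length_eq)
    (four_le_length_of_isConj hl.isConj_cosetWordE6)

theorem isCoxeterWord_E6 : IsCoxeterWord ({0, 2, 4, 5} : Finset (Fin 6)) [0, 2, 4, 5] :=
  ⟨by decide, by decide⟩

theorem isLeast_length_isConj :
    IsLeast {k | ∃ v, IsConj (csE6.wordProd cosetWordE6) v ∧ k = csE6.length v} 4 := by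
  refine ⟨⟨_, isConj_coxeterWord, isCoxeterWord_E6.length_wordProd_E6.symm⟩, ?_⟩
  rintro _ ⟨v, hv, rfl⟩
  exact four_le_length_of_isConj hv

end TypeE6

/-- In the Weyl group of type `E₆` (Bourbaki labels),
`w_{1,0}·w₀ = s₁s₃s₄s₅s₆s₂s₄s₅s₃s₄s₁s₃s₂s₄s₅s₆`, and the set of minimal length elements
of the conjugacy class of `w_{1,0}·w₀` equals the set of Coxeter elements of the
standard parabolic subgroup `W_J`, `J = {1, 3, 5, 6}`; in particular the minimal length
in this conjugacy class is `4`. -/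
theorem typeE6_w10_mul_w0
    (w₀ : WE6) (hw₀ : ∀ v : WE6, csE6.length v ≤ csE6.length w₀)
    (w₁ : WE6) (hw₁ : w₁ ∈ paraE6 0)
    (hw₁max : ∀ v ∈ paraE6 0, csE6.length v ≤ csE6.length w₁) :
    w₁ * w₀ = csE6.wordProd [0, 2, 3, 4, 5, 1, 3, 4, 2, 3, 0, 2, 1, 3, 4, 5] ∧
    {w : WE6 | IsConj (w₁ * w₀) w ∧
        ∀ v : WE6, IsConj (w₁ * w₀) v → csE6.length w ≤ csE6.length v}
      = {w : WE6 | ∃ l : List (Fin 6), l.Nodup ∧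
          (∀ j : Fin 6, j ∈ l ↔ j ∈ ({0, 2, 4, 5} : Finset (Fin 6))) ∧
          w = csE6.wordProd l} ∧
    sInf {k : ℕ | ∃ v : WE6, IsConj (w₁ * w₀) v ∧ k = csE6.length v} = 4 := by
  have hw₁_longest : IsLongestIn csE6 {j | j ≠ 0} w₁ := ⟨hw₁, hw₁max⟩
  have hw₀_longest : IsLongestIn csE6 Set.univ w₀ :=
    ⟨mem_standardParabolic_univ w₀, fun v _ => hw₀ v⟩
  have hprod : w₁ * w₀ = csE6.wordProd cosetWordE6 := by
    rw [hw₀_longest.eq_wordProd_longestWordE6, csE6.wordProd_append,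
      ← hw₁_longest.eq_wordProd_longestWordD5, ← mul_assoc, hw₁_longest.mul_self, one_mul]
  rw [hprod]
  refine ⟨rfl, ?_, isLeast_length_isConj.csInf_eq⟩
  ext w
  constructor
  · rintro ⟨hw, hmin⟩
    obtain ⟨ω, hω, rfl⟩ := csE6.exists_isReduced w
    have hle := hmin _ isConj_coxeterWord
    rw [isCoxeterWord_E6.length_wordProd_E6, hω.eq] at hle
    obtain ⟨hnodup, hmem⟩ := isCoxeterWord_of_subset_toFinset (subset_toFinset_of_isConj hw) hle
    exact ⟨ω, hnodup, hmem, rfl⟩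
  · rintro ⟨l, hnodup, hmem, rfl⟩
    have hl : IsCoxeterWord {0, 2, 4, 5} l := ⟨hnodup, hmem⟩
    exact ⟨hl.isConj_cosetWordE6,
      fun v hv => hl.length_wordProd_E6.trans_le (four_le_length_of_isConj hv)⟩
end
end

section
/- Let W be the Weyl group of type E_7 with simple reflections s_1, …, s_7 labeled as in Bourbaki. Then w_{7,0}·w_0 = s_7 s_6 s_5 s_4 s_3 s_2 s_4 s_5 s_6 s_7 s_1 s_3 s_4 s_5 s_6 s_2 s_4 s_5 s_3 s_4 s_1 s_3 s_2 s_4 s_5 s_6 s_7, and the set of elements of minimal length in the conjugacy class of w_{7,0}·w_0 is exactly {s_2·s_5·s_7}; in particular, the minimal length in this conjugacy class is 3. -/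
noncomputable section
open CoxeterMatrix

/-- The Weyl group of type `E₇`, given by its Coxeter presentation; the index `j : Fin 7`
corresponds to the Bourbaki label `j + 1`. -/
abbrev WE7 := (E₇).Group

/-- The canonical Coxeter system of type `E₇`. -/
def csE7 : CoxeterSystem E₇ WE7 := (E₇).toCoxeterSystem

/-- The standard parabolic subgroup of the type-`E₇` Weyl group generated by all simple
reflections except the one with (zero-based) index `i`. -/
def paraE7 (i : Fin 7) : Subgroup WE7 :=
  Subgroup.closure (csE7.simple '' {j : Fin 7 | j ≠ i})

/-!
A simply laced Coxeter group acts on its root lattice, and `w αᵢ` has nonnegative coordinates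
exactly when `ℓ(w sᵢ) > ℓ(w)`. Hence the action is faithful, and an element of a parabolic subgroup
`W_J` sending every `αⱼ`, `j ∈ J`, to a nonpositive vector is the unique longest element of `W_J`;
this turns the identification of `w₀`, of `w_{7,0}` and of a conjugating element into finite
computations.

For the conjugacy class, note that the nodes `2, 5, 7` are pairwise nonadjacent and every node has
an even number of neighbours among them, so `α₂ + α₅ + α₇` is `W`-invariant modulo `2`. This forces
each of `s₂, s₅, s₇` to occur in every word for every conjugate of `s₂ s₅ s₇`; a conjugate of
length at most `3` is then the product of these commuting reflections.
-/

/-- A Coxeter matrix is simply laced if all its off-diagonal entries are `2` or `3`. -/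
class SimplyLaced {B : Type*} (M : CoxeterMatrix B) : Prop where
  eq_two_or_eq_three (i j : B) : i ≠ j → M i j = 2 ∨ M i j = 3

namespace SimplyLaced

variable {B W : Type*} [Group W] {M : CoxeterMatrix B} (cs : CoxeterSystem M W)

theorem simple_commute {i j : B} (h : M i j = 2) : Commute (cs.simple i) (cs.simple j) := by
  have hbraid := cs.wordProd_braidWord_eq i j
  rw [CoxeterSystem.braidWord, CoxeterSystem.braidWord, M.symmetric j i, h] at hbraid
  simpa [CoxeterSystem.alternatingWord, CoxeterSystem.wordProd_cons, commute_iff_eq]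
    using hbraid

theorem wordProd_braid {i j : B} (h : M i j = 3) :
    cs.wordProd [i, j, i] = cs.wordProd [j, i, j] := by
  have hbraid := cs.wordProd_braidWord_eq i j
  rw [CoxeterSystem.braidWord, CoxeterSystem.braidWord, M.symmetric j i, h] at hbraid
  simpa [CoxeterSystem.alternatingWord] using hbraid.symm

theorem not_isRightDescent_of_length_add_lt {u : W} {j : B} {ω : List B}
    (h : cs.length u + ω.length < cs.length (u * cs.wordProd (j :: ω))) :
    ¬ cs.IsRightDescent u j := by
  rw [cs.wordProd_cons, ← mul_assoc] at h
  have hmul := cs.length_mul_le (u * cs.simple j) (cs.wordProd ω)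
  have hω := cs.length_wordProd_le ω
  rw [CoxeterSystem.IsRightDescent]
  omega

theorem not_isRightDescent_of_eq_two {w : W} {i j : B} (h : M j i = 2)
    (hj : ¬ cs.IsRightDescent w j) (hi : ¬ cs.IsRightDescent (w * cs.simple j) i) :
    ¬ cs.IsRightDescent w i := by
  apply not_isRightDescent_of_length_add_lt cs (ω := [j])
  have hcomm : cs.wordProd [i, j] = cs.simple j * cs.simple i := by
    simpa [cs.wordProd_cons] using (simple_commute cs h).eq.symm
  rw [hcomm, ← mul_assoc, cs.not_isRightDescent_iff.1 hi, cs.not_isRightDescent_iff.1 hj,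
    List.length_singleton]
  exact Nat.lt_succ_self _

theorem not_isRightDescent_of_eq_three {w : W} {i j : B} (h : M j i = 3)
    (hi : ¬ cs.IsRightDescent w i) (hj : ¬ cs.IsRightDescent (w * cs.simple i) j)
    (hi' : ¬ cs.IsRightDescent (w * cs.simple i * cs.simple j) i) :
    ¬ cs.IsRightDescent w j := by
  apply not_isRightDescent_of_length_add_lt cs (ω := [i, j])
  have hbraid : cs.wordProd [j, i, j] = cs.simple i * cs.simple j * cs.simple i := by
    simpa [cs.wordProd_cons, mul_assoc] using wordProd_braid cs h
  rw [hbraid, ← mul_assoc, ← mul_assoc, cs.not_isRightDescent_iff.1 hi',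
    cs.not_isRightDescent_iff.1 hj, cs.not_isRightDescent_iff.1 hi]
  exact Nat.lt_succ_self _

/-- The standard parabolic subgroup generated by the simple reflections with index in `J`. -/
def parabolic (J : Set B) : Subgroup W := Subgroup.closure (cs.simple '' J)

theorem simple_mem_parabolic {J : Set B} {j : B} (hj : j ∈ J) : cs.simple j ∈ parabolic cs J :=
  Subgroup.subset_closure (Set.mem_image_of_mem _ hj)

theorem wordProd_mem_parabolic {J : Set B} {ω : List B} (h : ∀ j ∈ ω, j ∈ J) :
    cs.wordProd ω ∈ parabolic cs J := by
  refine Subgroup.list_prod_mem _ fun x hx ↦ ?_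
  obtain ⟨j, hj, rfl⟩ := List.mem_map.1 hx
  exact simple_mem_parabolic cs (h j hj)

theorem isRightDescent_of_forall_length_le {J : Set B} {w : W} (hw : w ∈ parabolic cs J)
    (hmax : ∀ v ∈ parabolic cs J, cs.length v ≤ cs.length w) {j : B} (hj : j ∈ J) :
    cs.IsRightDescent w j :=
  lt_of_le_of_ne (hmax _ (mul_mem hw (simple_mem_parabolic cs hj))) (cs.length_mul_simple_ne w j)

theorem wordProd_eq_of_perm {l ω : List B} (hl : l.Pairwise (M · · = 2)) (h : l.Perm ω) :
    cs.wordProd ω = cs.wordProd l :=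
  ((h.map cs.simple).prod_eq' (List.pairwise_map.2 (hl.imp (simple_commute cs)))).symm

theorem nodup_of_pairwise_eq_two {l : List B} (hl : l.Pairwise (M · · = 2)) : l.Nodup :=
  hl.imp fun {i j} h hij ↦ by simp [hij] at h

/-! ### The geometric representation -/

variable (M) in
/-- The Cartan matrix of a simply laced Coxeter matrix. The entry `-1` is meant for `M i j = 3`;
other values of `M i j` do not occur. -/
def cartan : Matrix B B ℤ :=
  Matrix.of fun i j ↦ if M i j = 1 then 2 else if M i j = 2 then 0 else -1

theorem cartan_self (i : B) : cartan M i i = 2 := by simp [cartan]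

theorem cartan_of_eq_two {i j : B} (h : M i j = 2) : cartan M i j = 0 := by simp [cartan, h]

theorem cartan_of_eq_three {i j : B} (h : M i j = 3) : cartan M i j = -1 := by simp [cartan, h]

theorem even_cartan_iff [SimplyLaced M] (i j : B) : Even (cartan M i j) ↔ M i j ≠ 3 := by
  rcases eq_or_ne i j with rfl | hij
  · simp [cartan_self]
  · rcases eq_two_or_eq_three (M := M) _ _ hij with h | h
    · simp [cartan_of_eq_two h, h]
    · simp [cartan_of_eq_three h, h]

section Representation

variable [DecidableEq B]

/-- The simple root `αᵢ`, as a basis vector of the root lattice `B → ℤ`. -/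
def root (i : B) : B → ℤ := Pi.single i 1

theorem root_nonneg (i : B) : 0 ≤ root i := Pi.single_nonneg.2 zero_le_one

theorem root_apply_self (i : B) : root i i = 1 := Pi.single_eq_same i 1

theorem root_apply_of_ne {i j : B} (h : i ≠ j) : root j i = 0 := Pi.single_eq_of_ne h 1

theorem sum_map_root_apply (l : List B) (k : B) : (l.map root).sum k = l.count k := by
  induction l with
  | nil => simp
  | cons i l ih => simp [ih, root, Pi.single_apply, List.count_cons, add_comm, eq_comm (a := i)]

variable [Fintype B]

variable (M) in
/-- The simple coroot `αᵢ^∨`, as a linear form on the root lattice. -/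
def coroot (i : B) : (B → ℤ) →ₗ[ℤ] ℤ := LinearMap.proj i ∘ₗ (cartan M).mulVecLin

theorem coroot_root (i j : B) : coroot M i (root j) = cartan M i j := by simp [coroot, root]

theorem coroot_root_self (i : B) : coroot M i (root i) = 2 := by rw [coroot_root, cartan_self]

theorem even_coroot_sum_iff [SimplyLaced M] (i : B) (l : List B) :
    Even (coroot M i (l.map root).sum) ↔ Even (l.countP (M i · = 3)) := by
  induction l with
  | nil => simp
  | cons j l ih =>
    rw [List.map_cons, List.sum_cons, map_add, coroot_root, Int.even_add, ih, even_cartan_iff]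
    by_cases h : M i j = 3 <;> simp [h, Nat.even_add_one]

variable (M) in
/-- The simple reflection `v ↦ v - ⟨v, αᵢ^∨⟩ αᵢ` of the root lattice. -/
def reflection (i : B) : (B → ℤ) ≃ₗ[ℤ] (B → ℤ) := Module.reflection (coroot_root_self (M := M) i)

theorem reflection_apply (i : B) (v : B → ℤ) :
    reflection M i v = v - coroot M i v • root i := Module.reflection_apply _ _

theorem reflection_root_self (i : B) : reflection M i (root i) = -root i :=
  Module.reflection_apply_self _

theorem reflection_root_of_eq_two {i j : B} (h : M i j = 2) :
    reflection M i (root j) = root j := by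
  rw [reflection_apply, coroot_root, cartan_of_eq_two h, zero_smul, sub_zero]

theorem reflection_root_of_eq_three {i j : B} (h : M i j = 3) :
    reflection M i (root j) = root i + root j := by
  rw [reflection_apply, coroot_root, cartan_of_eq_three h, neg_smul, one_smul, sub_neg_eq_add,
    add_comm]

variable [SimplyLaced M]

theorem isLiftable_reflection : M.IsLiftable (reflection M) := by
  intro i j
  ext1 v
  rcases eq_or_ne i j with rfl | hij
  · rw [M.diagonal, pow_one, LinearEquiv.mul_apply, LinearEquiv.coe_one, id_eq]
    exact Module.involutive_reflection (coroot_root_self i) v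
  rcases eq_two_or_eq_three (M := M) _ _ hij with h | h
  · have hij := cartan_of_eq_two h
    have hji := cartan_of_eq_two ((M.symmetric j i).trans h)
    simp only [h, pow_two, LinearEquiv.mul_apply, LinearEquiv.coe_one, id_eq, reflection_apply,
      map_sub, map_smul, coroot_root, cartan_self, hij, hji]
    module
  · have hij := cartan_of_eq_three h
    have hji := cartan_of_eq_three ((M.symmetric j i).trans h)
    simp only [h, pow_succ, pow_zero, one_mul, LinearEquiv.mul_apply, LinearEquiv.coe_one, id_eq,
      reflection_apply, map_sub, map_smul, coroot_root, cartan_self, hij, hji]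
    module

/-- The geometric representation of a simply laced Coxeter group on its root lattice. -/
def rep : W →* (B → ℤ) ≃ₗ[ℤ] (B → ℤ) := cs.lift ⟨reflection M, isLiftable_reflection⟩

theorem rep_simple (i : B) : rep cs (cs.simple i) = reflection M i :=
  cs.lift_apply_simple isLiftable_reflection i

theorem rep_mul_apply (w u : W) (v : B → ℤ) : rep cs (w * u) v = rep cs w (rep cs u v) := by
  rw [map_mul, LinearEquiv.mul_apply]

theorem rep_mul_simple_apply (w : W) (i : B) (v : B → ℤ) :
    rep cs (w * cs.simple i) v = rep cs w (reflection M i v) := by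
  rw [rep_mul_apply, rep_simple]

theorem rep_wordProd_apply (ω : List B) (v : B → ℤ) :
    rep cs (cs.wordProd ω) v = ω.foldr (fun i u ↦ reflection M i u) v := by
  induction ω with
  | nil => simp
  | cons i ω ih => rw [cs.wordProd_cons, rep_mul_apply, ih, rep_simple, List.foldr_cons]

theorem rep_apply_eq_sum (w : W) (v : B → ℤ) : rep cs w v = ∑ i, v i • rep cs w (root i) := by
  conv_lhs => rw [← Finset.univ_sum_single v]
  simp only [map_sum, root, ← map_smul, ← Pi.single_smul, smul_eq_mul, mul_one]

theorem rep_apply_of_mem_parabolic {J : Set B} {w : W} (hw : w ∈ parabolic cs J) {k : B}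
    (hk : k ∉ J) (v : B → ℤ) : rep cs w v k = v k := by
  induction hw using Subgroup.closure_induction generalizing v with
  | mem x hx =>
    obtain ⟨j, hj, rfl⟩ := hx
    have hkj : k ≠ j := fun h ↦ hk (h ▸ hj)
    simp [rep_simple, reflection_apply, root_apply_of_ne hkj]
  | one => simp
  | mul x y _ _ hx hy => rw [rep_mul_apply, hx, hy]
  | inv x _ hx => rw [← hx (rep cs x⁻¹ v), ← rep_mul_apply, mul_inv_cancel, map_one,
      LinearEquiv.coe_one, id_eq]

/-! ### Descents and the sign of roots -/

/-- The rank-two reduction: `w αᵢ` is computed in the coset of `w` modulo the dihedral group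
`⟨sᵢ, sⱼ⟩`, from a shorter representative. -/
theorem exists_rep_root_eq_sum {w : W} {i j : B} (hi : ¬ cs.IsRightDescent w i)
    (hj : cs.IsRightDescent w j) :
    ∃ (u : W) (l : List B), cs.length u < cs.length w ∧ (∀ k ∈ l, ¬ cs.IsRightDescent u k) ∧
      rep cs w (root i) = (l.map fun k ↦ rep cs u (root k)).sum := by
  obtain ⟨v, rfl⟩ : ∃ v, w = v * cs.simple j := ⟨w * cs.simple j, by simp⟩
  have hij : j ≠ i := by rintro rfl; exact hi hj
  have hvj := cs.isRightDescent_iff_not_isRightDescent_mul.1 hj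
  rw [cs.simple_mul_simple_cancel_right] at hvj
  have hvlen := cs.not_isRightDescent_iff.1 hvj
  rcases eq_two_or_eq_three (M := M) _ _ hij with h | h
  · refine ⟨v, [i], by omega, ?_, ?_⟩
    · simpa using not_isRightDescent_of_eq_two cs h hvj hi
    · rw [rep_mul_simple_apply, reflection_root_of_eq_two h, List.map_singleton,
        List.sum_singleton]
  by_cases hvi : cs.IsRightDescent v i
  · obtain ⟨u, rfl⟩ : ∃ u, v = u * cs.simple i := ⟨v * cs.simple i, by simp⟩
    have hui := cs.isRightDescent_iff_not_isRightDescent_mul.1 hvi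
    rw [cs.simple_mul_simple_cancel_right] at hui
    have hulen := cs.not_isRightDescent_iff.1 hui
    refine ⟨u, [j], by omega, ?_, ?_⟩
    · simpa using not_isRightDescent_of_eq_three cs h hui hvj hi
    · have hroot : reflection M i (reflection M j (root i)) = root j := by
        rw [reflection_root_of_eq_three h, map_add, reflection_root_self,
          reflection_root_of_eq_three ((M.symmetric i j).trans h), add_comm (root i),
          add_neg_cancel_right]
      rw [rep_mul_simple_apply, rep_mul_simple_apply, hroot, List.map_singleton,
        List.sum_singleton]
  · refine ⟨v, [j, i], by omega, by simp [hvi, hvj], ?_⟩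
    rw [rep_mul_simple_apply, reflection_root_of_eq_three h, map_add, List.map_cons,
      List.map_singleton, List.sum_cons, List.sum_singleton]

theorem rep_root_nonneg {w : W} {i : B} (h : ¬ cs.IsRightDescent w i) :
    0 ≤ rep cs w (root i) := by
  induction hn : cs.length w using Nat.strong_induction_on generalizing w i with
  | _ n ih =>
  subst hn
  rcases eq_or_ne w 1 with rfl | hw
  · simpa using root_nonneg i
  obtain ⟨j, hj⟩ := cs.exists_rightDescent_of_ne_one hw
  obtain ⟨u, l, hu, hl, hsum⟩ := exists_rep_root_eq_sum cs h hj
  rw [hsum]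
  refine List.sum_nonneg fun x hx ↦ ?_
  obtain ⟨k, hk, rfl⟩ := List.mem_map.1 hx
  exact ih _ hu (hl k hk) rfl

theorem rep_root_nonpos {w : W} {i : B} (h : cs.IsRightDescent w i) :
    rep cs w (root i) ≤ 0 := by
  have := rep_root_nonneg cs (cs.isRightDescent_iff_not_isRightDescent_mul.1 h)
  rwa [rep_mul_simple_apply, reflection_root_self, map_neg, Left.nonneg_neg_iff] at this

theorem eq_one_of_rep_root_nonneg {w : W} (h : ∀ i, 0 ≤ rep cs w (root i)) : w = 1 := by
  by_contra hw
  obtain ⟨i, hi⟩ := cs.exists_rightDescent_of_ne_one hw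
  have hzero : rep cs w (root i) = 0 := le_antisymm (rep_root_nonpos cs hi) (h i)
  rw [LinearEquiv.map_eq_zero_iff] at hzero
  simp [root] at hzero

theorem rep_injective : Function.Injective (rep cs) := by
  refine (injective_iff_map_eq_one _).2 fun w hw ↦ eq_one_of_rep_root_nonneg cs fun i ↦ ?_
  simpa [hw] using root_nonneg i

theorem ext_rep_root {w u : W} (h : ∀ i, rep cs w (root i) = rep cs u (root i)) : w = u :=
  rep_injective cs <| LinearEquiv.ext fun v ↦ by
    rw [rep_apply_eq_sum, rep_apply_eq_sum]
    simp only [h]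

/-! ### Longest elements of parabolic subgroups -/

theorem mul_eq_one_of_rep_root_nonpos {J : Set B} {w u : W}
    (hw : w ∈ parabolic cs J) (hw' : ∀ j ∈ J, rep cs w (root j) ≤ 0)
    (hu : u ∈ parabolic cs J) (hu' : ∀ j ∈ J, rep cs u (root j) ≤ 0) : w * u = 1 := by
  refine eq_one_of_rep_root_nonneg cs fun i ↦ ?_
  by_cases hi : i ∈ J
  · rw [rep_mul_apply, rep_apply_eq_sum]
    refine Finset.sum_nonneg fun j _ ↦ ?_
    by_cases hj : j ∈ J
    · exact smul_nonneg_of_nonpos_of_nonpos (hu' i hi j) (hw' j hj)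
    · have hij : j ≠ i := fun h ↦ hj (h ▸ hi)
      rw [rep_apply_of_mem_parabolic cs hu hj, root_apply_of_ne hij, zero_smul]
  · refine rep_root_nonneg cs fun hd ↦ ?_
    have hneg := rep_root_nonpos cs hd i
    rw [rep_apply_of_mem_parabolic cs (mul_mem hw hu) hi, root_apply_self] at hneg
    exact absurd hneg (by simp)

theorem eq_of_length_le_of_rep_root_nonpos {J : Set B} {w u : W} (hw : w ∈ parabolic cs J)
    (hmax : ∀ v ∈ parabolic cs J, cs.length v ≤ cs.length w)
    (hu : u ∈ parabolic cs J) (hu' : ∀ j ∈ J, rep cs u (root j) ≤ 0) : w = u := by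
  have hwu : w * u = 1 := mul_eq_one_of_rep_root_nonpos cs hw
    (fun j hj ↦ rep_root_nonpos cs (isRightDescent_of_forall_length_le cs hw hmax hj)) hu hu'
  have huu : u * u = 1 := mul_eq_one_of_rep_root_nonpos cs hu hu' hu hu'
  exact mul_right_cancel (hwu.trans huu.symm)

theorem eq_of_forall_length_le_of_rep_eq_neg {w u : W} (hw : ∀ v, cs.length v ≤ cs.length w)
    (hu : ∀ i, rep cs u (root i) = -root i) : w = u := by
  have htop : parabolic cs Set.univ = ⊤ := by
    rw [parabolic, Set.image_univ, cs.subgroup_closure_range_simple]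
  refine eq_of_length_le_of_rep_root_nonpos cs (J := Set.univ) ?_ (fun v _ ↦ hw v) ?_
    fun i _ ↦ ?_
  · simp [htop]
  · simp [htop]
  · simpa [hu] using root_nonneg i

/-! ### Conjugates of products of commuting simple reflections -/

theorem exists_rep_eq_add_two_smul {v : B → ℤ} (hv : ∀ i, Even (coroot M i v)) (g : W) :
    ∃ u : B → ℤ, rep cs g v = v + (2 : ℤ) • u := by
  induction g using cs.simple_induction_left with
  | one => exact ⟨0, by simp⟩
  | mul_simple_left w i ih =>
    obtain ⟨u, hu⟩ := ih
    obtain ⟨m, hm⟩ := (hv i).exists_two_nsmul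
    refine ⟨reflection M i u - m • root i, ?_⟩
    rw [rep_mul_apply, hu, rep_simple, map_add, map_smul, reflection_apply i v, hm]
    module

theorem rep_wordProd_root_of_forall_eq_two {l : List B} {i : B} (h : ∀ j ∈ l, M j i = 2) :
    rep cs (cs.wordProd l) (root i) = root i := by
  rw [rep_wordProd_apply]
  induction l with
  | nil => rfl
  | cons j l ih =>
    rw [List.forall_mem_cons] at h
    rw [List.foldr_cons, ih h.2, reflection_root_of_eq_two h.1]

theorem rep_wordProd_root_of_mem {l : List B} (hl : l.Pairwise (M · · = 2)) {i : B}
    (hi : i ∈ l) : rep cs (cs.wordProd l) (root i) = -root i := by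
  induction l with
  | nil => simp at hi
  | cons j l ih =>
    rw [List.pairwise_cons] at hl
    rw [cs.wordProd_cons, rep_mul_apply, rep_simple]
    rcases List.mem_cons.1 hi with rfl | hi
    · rw [rep_wordProd_root_of_forall_eq_two cs fun j hj ↦ (M.symmetric j i).trans (hl.1 j hj),
        reflection_root_self]
    · rw [ih hl.2 hi, map_neg, reflection_root_of_eq_two (hl.1 i hi)]

end Representation

section Conjugacy

variable [Finite B] [SimplyLaced M]

/-- If a letter `k` of `l` were missing from `ω`, the `k`-th coordinate would be invariant under
`ω`. Write `π ω = g (π l) g⁻¹`: since `π ω` negates `g αⱼ` for `j ∈ l`, the `k`-th coordinate of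
`g (∑ αⱼ)` would vanish, although it is odd because `∑ αⱼ` is `W`-invariant modulo `2`. -/
theorem mem_of_isConj_wordProd {l ω : List B} (hl : l.Pairwise (M · · = 2))
    (heven : ∀ i, Even (l.countP (M i · = 3)))
    (h : IsConj (cs.wordProd l) (cs.wordProd ω)) {k : B} (hk : k ∈ l) : k ∈ ω := by
  classical
  cases nonempty_fintype B
  by_contra hkω
  obtain ⟨g, hg⟩ := isConj_iff.1 h
  have hfix (v : B → ℤ) : rep cs (cs.wordProd ω) v k = v k :=
    rep_apply_of_mem_parabolic cs (J := {j | j ≠ k})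
      (wordProd_mem_parabolic cs fun j hj hjk ↦ hkω (hjk ▸ hj)) (by simp) v
  have hneg (j : B) (hj : j ∈ l) :
      rep cs (cs.wordProd ω) (rep cs g (root j)) = -rep cs g (root j) := by
    rw [← rep_mul_apply, ← hg, inv_mul_cancel_right, rep_mul_apply,
      rep_wordProd_root_of_mem cs hl hj, map_neg]
  have hzero (j : B) (hj : j ∈ l) : rep cs g (root j) k = 0 := by
    have := hfix (rep cs g (root j))
    rw [hneg j hj, Pi.neg_apply] at this
    omega
  have hsum : rep cs g (l.map root).sum k = 0 := by
    rw [map_list_sum, List.map_map, Pi.list_sum_apply, List.map_map]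
    exact List.sum_eq_zero (by simpa using hzero)
  obtain ⟨u, hu⟩ := exists_rep_eq_add_two_smul cs (fun i ↦ (even_coroot_sum_iff i l).2 (heven i)) g
  have hone : (l.map root).sum k = 1 := by
    rw [sum_map_root_apply, List.count_eq_one_of_mem (nodup_of_pairwise_eq_two hl) hk, Nat.cast_one]
  rw [hu, Pi.add_apply, hone, Pi.smul_apply, smul_eq_mul] at hsum
  omega

theorem subperm_of_isConj_wordProd {l ω : List B} (hl : l.Pairwise (M · · = 2))
    (heven : ∀ i, Even (l.countP (M i · = 3)))
    (h : IsConj (cs.wordProd l) (cs.wordProd ω)) : l.Subperm ω :=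
  List.subperm_of_subset (nodup_of_pairwise_eq_two hl)
    fun _ ↦ mem_of_isConj_wordProd cs hl heven h

theorem length_le_length_of_isConj {l : List B} (hl : l.Pairwise (M · · = 2))
    (heven : ∀ i, Even (l.countP (M i · = 3))) {w : W} (h : IsConj (cs.wordProd l) w) :
    l.length ≤ cs.length w := by
  obtain ⟨ω, hω, rfl⟩ := cs.exists_isReduced w
  exact hω.eq ▸ (subperm_of_isConj_wordProd cs hl heven h).length_le

theorem eq_wordProd_of_isConj_of_length_le {l : List B} (hl : l.Pairwise (M · · = 2))
    (heven : ∀ i, Even (l.countP (M i · = 3))) {w : W} (h : IsConj (cs.wordProd l) w)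
    (hw : cs.length w ≤ l.length) : w = cs.wordProd l := by
  obtain ⟨ω, hω, rfl⟩ := cs.exists_isReduced w
  exact wordProd_eq_of_perm cs hl
    ((subperm_of_isConj_wordProd cs hl heven h).perm_of_length_le (hω.eq ▸ hw))

theorem isReduced_of_even_countP {l : List B} (hl : l.Pairwise (M · · = 2))
    (heven : ∀ i, Even (l.countP (M i · = 3))) : cs.IsReduced l :=
  le_antisymm (cs.length_wordProd_le l) (length_le_length_of_isConj cs hl heven (.refl _))

theorem setOf_isConj_length_minimal_eq_singleton {l : List B} (hl : l.Pairwise (M · · = 2))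
    (heven : ∀ i, Even (l.countP (M i · = 3))) {x : W} (hx : IsConj x (cs.wordProd l)) :
    {w : W | IsConj x w ∧ ∀ v : W, IsConj x v → cs.length w ≤ cs.length v} =
      {cs.wordProd l} := by
  have hred := (isReduced_of_even_countP cs hl heven).eq
  ext w
  constructor
  · rintro ⟨hw, hmin⟩
    exact eq_wordProd_of_isConj_of_length_le cs hl heven (hx.symm.trans hw) (hred ▸ hmin _ hx)
  · rintro rfl
    exact ⟨hx, fun v hv ↦ hred ▸ length_le_length_of_isConj cs hl heven (hx.symm.trans hv)⟩

end Conjugacy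

end SimplyLaced

/-! ### Computations in type `E₇` -/

namespace TypeE7

open SimplyLaced

instance : SimplyLaced E₇ := ⟨fun i j ↦ by fin_cases i <;> fin_cases j <;> decide⟩

theorem cartan_E₇ : cartan E₇ = CartanMatrix.E₇ := by decide

theorem reflection_vec (a b c d e f g : ℤ) :
    reflection E₇ 0 ![a, b, c, d, e, f, g] = ![c - a, b, c, d, e, f, g] ∧
    reflection E₇ 1 ![a, b, c, d, e, f, g] = ![a, d - b, c, d, e, f, g] ∧
    reflection E₇ 2 ![a, b, c, d, e, f, g] = ![a, b, a + d - c, d, e, f, g] ∧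
    reflection E₇ 3 ![a, b, c, d, e, f, g] = ![a, b, c, b + c + e - d, e, f, g] ∧
    reflection E₇ 4 ![a, b, c, d, e, f, g] = ![a, b, c, d, d + f - e, f, g] ∧
    reflection E₇ 5 ![a, b, c, d, e, f, g] = ![a, b, c, d, e, e + g - f, g] ∧
    reflection E₇ 6 ![a, b, c, d, e, f, g] = ![a, b, c, d, e, f, f - g] := by
  refine ⟨?_, ?_, ?_, ?_, ?_, ?_, ?_⟩ <;> ext k <;> fin_cases k <;>
    simp [reflection_apply, coroot, root, cartan_E₇, CartanMatrix.E₇, Matrix.mulVec, dotProduct,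
      Fin.sum_univ_succ] <;> ring

theorem root_vec :
    root 0 = ![1, 0, 0, 0, 0, 0, 0] ∧ root 1 = ![0, 1, 0, 0, 0, 0, 0] ∧
    root 2 = ![0, 0, 1, 0, 0, 0, 0] ∧ root 3 = ![0, 0, 0, 1, 0, 0, 0] ∧
    root 4 = ![0, 0, 0, 0, 1, 0, 0] ∧ root 5 = ![0, 0, 0, 0, 0, 1, 0] ∧
    root 6 = ![0, 0, 0, 0, 0, 0, 1] := by
  simp only [root]
  decide

/-- A word for the longest element `w_{7,0}` of the parabolic subgroup of type `E₆`: the bipartite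
Coxeter element of `E₆`, raised to half the Coxeter number `12`. -/
def longestWordE6 : List (Fin 7) := (List.replicate 6 [0, 3, 5, 1, 2, 4]).flatten

/-- The word for `w_{7,0} * w₀` in the theorem. -/
def cosetWord : List (Fin 7) :=
  [6, 5, 4, 3, 2, 1, 3, 4, 5, 6, 0, 2, 3, 4, 5, 1, 3, 4, 2, 3, 0, 2, 1, 3, 4, 5, 6]

/-- A word for an element conjugating `w_{7,0} * w₀` to `s₂ s₅ s₇`. -/
def conjWord : List (Fin 7) := [5, 3, 4, 2, 3, 0, 2, 1, 3, 4, 5, 6]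

theorem rep_longestWordE6_root {i : Fin 7} (hi : i ≠ 6) :
    rep csE7 (csE7.wordProd longestWordE6) (root i) = -root (![5, 1, 4, 3, 2, 0, 6] i) := by
  rw [rep_wordProd_apply]
  fin_cases i <;> simp [longestWordE6, List.replicate, root_vec, reflection_vec] at hi ⊢

theorem rep_longestWordE6_mul_cosetWord_root (i : Fin 7) :
    rep csE7 (csE7.wordProd longestWordE6 * csE7.wordProd cosetWord) (root i) = -root i := by
  rw [← csE7.wordProd_append, rep_wordProd_apply]
  fin_cases i <;>
    simp [longestWordE6, List.replicate, cosetWord, root_vec, reflection_vec]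

theorem longest_eq_wordProd {w₀ : WE7} (hw₀ : ∀ v, csE7.length v ≤ csE7.length w₀) :
    w₀ = csE7.wordProd longestWordE6 * csE7.wordProd cosetWord :=
  eq_of_forall_length_le_of_rep_eq_neg csE7 hw₀ rep_longestWordE6_mul_cosetWord_root

theorem wordProd_longestWordE6_mem_paraE7 : csE7.wordProd longestWordE6 ∈ paraE7 6 :=
  wordProd_mem_parabolic csE7 (by simp [longestWordE6])

theorem rep_longestWordE6_root_nonpos {i : Fin 7} (hi : i ≠ 6) :
    rep csE7 (csE7.wordProd longestWordE6) (root i) ≤ 0 := by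
  rw [rep_longestWordE6_root hi, Left.neg_nonpos_iff]
  exact root_nonneg _

theorem longest_paraE7_eq_wordProd {w₇ : WE7} (hw₇ : w₇ ∈ paraE7 6)
    (hmax : ∀ v ∈ paraE7 6, csE7.length v ≤ csE7.length w₇) :
    w₇ = csE7.wordProd longestWordE6 :=
  eq_of_length_le_of_rep_root_nonpos csE7 hw₇ hmax wordProd_longestWordE6_mem_paraE7
    fun _ ↦ rep_longestWordE6_root_nonpos

theorem wordProd_longestWordE6_mul_self :
    csE7.wordProd longestWordE6 * csE7.wordProd longestWordE6 = 1 :=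
  mul_eq_one_of_rep_root_nonpos csE7
    wordProd_longestWordE6_mem_paraE7 (fun _ ↦ rep_longestWordE6_root_nonpos)
    wordProd_longestWordE6_mem_paraE7 (fun _ ↦ rep_longestWordE6_root_nonpos)

theorem longest_paraE7_mul_longest {w₀ : WE7} (hw₀ : ∀ v, csE7.length v ≤ csE7.length w₀)
    {w₇ : WE7} (hw₇ : w₇ ∈ paraE7 6)
    (hmax : ∀ v ∈ paraE7 6, csE7.length v ≤ csE7.length w₇) :
    w₇ * w₀ = csE7.wordProd cosetWord := by
  rw [longest_paraE7_eq_wordProd hw₇ hmax, longest_eq_wordProd hw₀, ← mul_assoc,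
    wordProd_longestWordE6_mul_self, one_mul]

theorem conjWord_mul_cosetWord :
    csE7.wordProd conjWord * csE7.wordProd cosetWord =
      csE7.wordProd [1, 4, 6] * csE7.wordProd conjWord := by
  rw [← csE7.wordProd_append, ← csE7.wordProd_append]
  refine ext_rep_root csE7 fun i ↦ ?_
  rw [rep_wordProd_apply, rep_wordProd_apply]
  fin_cases i <;> simp [conjWord, cosetWord, root_vec, reflection_vec]

theorem isConj_wordProd_cosetWord :
    IsConj (csE7.wordProd cosetWord) (csE7.wordProd [1, 4, 6]) :=
  isConj_iff.2 ⟨csE7.wordProd conjWord, mul_inv_eq_of_eq_mul conjWord_mul_cosetWord⟩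

end TypeE7

/-- In the Weyl group of type `E₇` (Bourbaki labels),
`w_{7,0}·w₀ = s₇s₆s₅s₄s₃s₂s₄s₅s₆s₇s₁s₃s₄s₅s₆s₂s₄s₅s₃s₄s₁s₃s₂s₄s₅s₆s₇`, and the set of
minimal length elements of the conjugacy class of `w_{7,0}·w₀` is exactly
`{s₂·s₅·s₇}`; in particular the minimal length in this conjugacy class is `3`. -/
theorem typeE7_w70_mul_w0
    (w₀ : WE7) (hw₀ : ∀ v : WE7, csE7.length v ≤ csE7.length w₀)
    (w₇ : WE7) (hw₇ : w₇ ∈ paraE7 6)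
    (hw₇max : ∀ v ∈ paraE7 6, csE7.length v ≤ csE7.length w₇) :
    w₇ * w₀ = csE7.wordProd
      [6, 5, 4, 3, 2, 1, 3, 4, 5, 6, 0, 2, 3, 4, 5, 1, 3, 4, 2, 3, 0, 2, 1, 3, 4, 5, 6] ∧
    {w : WE7 | IsConj (w₇ * w₀) w ∧
        ∀ v : WE7, IsConj (w₇ * w₀) v → csE7.length w ≤ csE7.length v}
      = {csE7.simple 1 * csE7.simple 4 * csE7.simple 6} ∧
    csE7.length (csE7.simple 1 * csE7.simple 4 * csE7.simple 6) = 3 := by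
  have hx := TypeE7.longest_paraE7_mul_longest hw₀ hw₇ hw₇max
  have hconj : IsConj (w₇ * w₀) (csE7.wordProd [1, 4, 6]) := hx ▸ TypeE7.isConj_wordProd_cosetWord
  have hcomm : [1, 4, 6].Pairwise (E₇ · · = 2) := by simp [E₇]
  have heven (i : Fin 7) : Even ([1, 4, 6].countP (E₇ i · = 3)) := by revert i; decide
  have hprod : csE7.simple 1 * csE7.simple 4 * csE7.simple 6 = csE7.wordProd [1, 4, 6] := by
    simp [csE7.wordProd_cons, mul_assoc]
  rw [hprod]
  exact ⟨hx, SimplyLaced.setOf_isConj_length_minimal_eq_singleton csE7 hcomm heven hconj,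
    (SimplyLaced.isReduced_of_even_countP csE7 hcomm heven).eq⟩
end
end
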